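/- arXiv:2305.16892 — 4 statements merged into one kernel-verified Lean document; each statement's English description precedes it below -/
import Mathlib

section
/- Let n, N, t ∈ ℕ with t ≥ 1 and N ≥ 1, and let v₁,…,v_N ∈ ℝⁿ be t-sparse vectors. Then there exist some i ∈ [N] and x ∈ ℝ^N such that ‖x‖₁ ≤ 3ᵗ and ‖vᵢ − Σ_{j≠i} xⱼvⱼ‖₂ ≤ 4^{t+2}·√t·(n/N)^{1/(4t)}·max_{j∈[N]} ‖vⱼ‖_∞. -/
open Matrix MeasureTheory ProbabilityTheory
open scoped BigOperators ENNReal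

noncomputable section

/-- `v` has at most `t` nonzero coordinates. -/
def SparseVec {k : ℕ} (t : ℕ) (v : Fin k → ℝ) : Prop := {i | v i ≠ 0}.ncard ≤ t

/-- ⟨x,y⟩_Σ := xᵀ Σ y. -/
def innerSigma {k : ℕ} (A : Matrix (Fin k) (Fin k) ℝ) (x y : Fin k → ℝ) : ℝ := x ⬝ᵥ (A *ᵥ y)

/-- ‖x‖_Σ := √(xᵀ Σ x). -/
def normSigma {k : ℕ} (A : Matrix (Fin k) (Fin k) ℝ) (x : Fin k → ℝ) : ℝ :=
  Real.sqrt (innerSigma A x x)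

/-- Euclidean norm on ℝ^k. -/
def l2norm {k : ℕ} (v : Fin k → ℝ) : ℝ := Real.sqrt (∑ i, v i ^ 2)

/-- ℓ1 norm on ℝ^k. -/
def l1norm {k : ℕ} (v : Fin k → ℝ) : ℝ := ∑ i, |v i|


lemma aux_spanner {ι α : Type*} [DecidableEq ι] [DecidableEq α] (W : Finset α) :
    ∀ (I : Finset ι) (v : ι → α → ℝ), ∃ P : Finset ι, P ⊆ I ∧ P.card ≤ W.card ∧
      ∀ (u : α → ℝ) (c : ℝ), 0 ≤ c → (∀ p ∈ P, |∑ w ∈ W, u w * v p w| ≤ c) →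
        ∀ i ∈ I, |∑ w ∈ W, u w * v i w| ≤ (2 ^ W.card - 1) * c := by
  induction W using Finset.induction_on with
  | empty =>
    intro I v
    exact ⟨∅, by simp, by simp, by simp⟩
  | insert a W ha ih =>
    intro I v
    by_cases hz : ∀ i ∈ I, v i a = 0
    · obtain ⟨P, hPI, hPc, hP⟩ := ih I v
      refine ⟨P, hPI, by rw [Finset.card_insert_of_notMem ha]; omega, ?_⟩
      intro u c hc hp i hi
      have h1 := hP u c hc (fun p hp' => by
        have := hp p hp'
        rwa [Finset.sum_insert ha, hz p (hPI hp'), mul_zero, zero_add] at this) i hi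
      rw [Finset.sum_insert ha, hz i hi, mul_zero, zero_add, Finset.card_insert_of_notMem ha]
      refine h1.trans ?_
      have : (2:ℝ) ^ W.card ≤ 2 ^ (W.card + 1) := pow_le_pow_right₀ (by norm_num) (by omega)
      gcongr
    · push Not at hz
      obtain ⟨i0, hi0, hi0'⟩ := hz
      obtain ⟨p, hpI, hpmax⟩ := Finset.exists_max_image I (fun i => |v i a|) ⟨i0, hi0⟩
      have hpa : v p a ≠ 0 := by
        have := hpmax i0 hi0
        intro h
        rw [h] at this
        simp at this
        exact hi0' this
      obtain ⟨P, hPI, hPc, hP⟩ := ih I (fun i w => v i w - v i a / v p a * v p w)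
      refine ⟨insert p P, ?_, ?_, ?_⟩
      · exact Finset.insert_subset hpI hPI
      · rw [Finset.card_insert_of_notMem ha]
        exact (Finset.card_insert_le _ _).trans (by omega)
      · intro u c hc hp i hi
        have hcoef : ∀ j ∈ I, |v j a / v p a| ≤ 1 := by
          intro j hj
          rw [abs_div, div_le_one (abs_pos.mpr hpa)]
          exact hpmax j hj
        have key : ∀ j, ∑ w ∈ insert a W, u w * v j w =
            ∑ w ∈ W, u w * (v j w - v j a / v p a * v p w)
              + v j a / v p a * ∑ w ∈ insert a W, u w * v p w := by
          intro j
          rw [Finset.sum_insert ha, Finset.sum_insert ha]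
          simp only [mul_sub, Finset.sum_sub_distrib, mul_add, Finset.mul_sum]
          have : ∀ w, u w * (v j a / v p a * v p w) = v j a / v p a * (u w * v p w) := by
            intro w; ring
          simp only [this]
          have h2 : v j a / v p a * (u a * v p a) = u a * v j a := by field_simp
          rw [h2]; ring
        have hpc := hp p (Finset.mem_insert_self _ _)
        have hbd : ∀ j ∈ I, |v j a / v p a * ∑ w ∈ insert a W, u w * v p w| ≤ c := by
          intro j hj
          rw [abs_mul]
          calc _ ≤ 1 * c := mul_le_mul (hcoef j hj) hpc (abs_nonneg _) zero_le_one
            _ = c := one_mul c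
        have h1 := hP u (2 * c) (by linarith) (fun q hq => by
          have h3 := hp q (Finset.mem_insert_of_mem hq)
          have h4 := hbd q (hPI hq)
          have h5 := key q
          have h6 : ∑ w ∈ W, u w * (v q w - v q a / v p a * v p w) =
            ∑ w ∈ insert a W, u w * v q w - v q a / v p a * ∑ w ∈ insert a W, u w * v p w := by
            linarith
          rw [h6]
          refine (abs_sub _ _).trans ?_
          linarith) i hi
        rw [key i, Finset.card_insert_of_notMem ha]
        refine (abs_add_le _ _).trans ?_
        have h4 := hbd i hi
        have : ((2:ℝ) ^ (W.card + 1) - 1) * c = (2 ^ W.card - 1) * (2 * c) + c := by ring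
        rw [this]
        exact add_le_add h1 h4

lemma aux_count {X : Type*} [Fintype X] [DecidableEq X] (Q s l : ℕ) (hQ : 0 < Q)
    (G : Finset (Fin Q)) (hG : 2 * l * G.card ≤ Q) (A Z : Finset X) (g : X → Fin Q)
    (hA : A.card ≤ s) (hZ : Z.card ≤ l) (hd : Disjoint A Z) :
    (Q : ℝ) ^ (Fintype.card X) ≤ 2 * Q ^ s *
      ((Finset.univ.filter (fun h : X → Fin Q => (∀ a ∈ A, h a = g a) ∧ ∀ z ∈ Z, h z ∉ G)).card : ℝ) := by
  have hQ' : (0:ℝ) < Q := by exact_mod_cast hQ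
  have hQ1 : (1:ℝ) ≤ Q := by exact_mod_cast hQ
  let F : X → Finset (Fin Q) := fun x => if x ∈ A then {g x} else if x ∈ Z then Gᶜ else Finset.univ
  have hset : (Finset.univ.filter (fun h : X → Fin Q => (∀ a ∈ A, h a = g a) ∧ ∀ z ∈ Z, h z ∉ G))
      = Fintype.piFinset F := by
    ext h
    simp only [Finset.mem_filter, Finset.mem_univ, true_and, Fintype.mem_piFinset, F]
    constructor
    · rintro ⟨h1, h2⟩ x
      split_ifs with ha hz
      · simp [h1 x ha]
      · simp [h2 x hz]
      · simp
    · intro h1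
      refine ⟨fun a ha => ?_, fun z hz => ?_⟩
      · have := h1 a
        simpa [ha] using this
      · have := h1 z
        have hza : z ∉ A := fun h => (Finset.disjoint_left.mp hd h) hz
        simpa [hza, hz] using this
  rw [hset, Fintype.card_piFinset]
  push_cast
  have hprod : (∏ x, ((F x).card : ℝ)) =
      Q ^ (Fintype.card X) * ((1 / Q) ^ A.card * (1 - G.card / Q) ^ Z.card) := by
    have e1 : ((1:ℝ) / Q) ^ A.card = ∏ x, (if x ∈ A then ((1:ℝ) / Q) else 1) := by
      rw [Finset.prod_ite_mem]; simp
    have e2 : ((1:ℝ) - G.card / Q) ^ Z.card = ∏ x, (if x ∈ Z then ((1:ℝ) - G.card / Q) else 1) := by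
      rw [Finset.prod_ite_mem]; simp
    have e3 : (Q:ℝ) ^ (Fintype.card X) = ∏ x : X, (Q:ℝ) := by simp
    rw [e1, e2, e3, ← Finset.prod_mul_distrib, ← Finset.prod_mul_distrib]
    refine Finset.prod_congr rfl (fun x _ => ?_)
    by_cases ha : x ∈ A
    · have hz : x ∉ Z := Finset.disjoint_left.mp hd ha
      simp [F, ha, hz]
      field_simp
    · by_cases hz : x ∈ Z
      · simp only [F, ha, hz, if_true, if_false]
        rw [Finset.card_compl, Nat.cast_sub (Finset.card_le_univ G)]
        simp
        field_simp
      · simp [F, ha, hz]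
  rw [hprod]
  have hGQ : (2:ℝ) * l * G.card ≤ Q := by exact_mod_cast hG
  have hb : (1:ℝ)/2 ≤ (1 - G.card / Q) ^ Z.card := by
    have hg1 : (G.card : ℝ) / Q ≤ 1 := by
      rw [div_le_one hQ']
      have := Finset.card_le_univ G
      simp at this
      exact_mod_cast this
    have := one_add_mul_le_pow (a := -((G.card:ℝ) / Q)) (by linarith) Z.card
    have h2 : (Z.card : ℝ) * (G.card / Q) ≤ 1 / 2 := by
      have hz : (Z.card:ℝ) ≤ l := by exact_mod_cast hZ
      calc (Z.card : ℝ) * (G.card / Q) ≤ l * (G.card / Q) := by gcongr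
        _ ≤ 1/2 := by
          rw [← mul_div_assoc, div_le_div_iff₀ hQ' (by norm_num)]; linarith
    rw [← sub_eq_add_neg] at this
    linarith
  have ha : (1:ℝ) ≤ Q ^ s * (1 / Q) ^ A.card := by
    have : (Q:ℝ) ^ A.card ≤ Q ^ s := pow_le_pow_right₀ hQ1 hA
    rw [one_div, inv_pow, ← div_eq_mul_inv, le_div_iff₀ (by positivity)]
    linarith
  have : (2:ℝ) * Q ^ s * (Q ^ (Fintype.card X) * ((1 / Q) ^ A.card * (1 - G.card / Q) ^ Z.card))
     = Q ^ (Fintype.card X) * ((Q ^ s * (1 / Q) ^ A.card) * (2 * (1 - G.card / Q) ^ Z.card)) := by ring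
  rw [this]
  have h3 : (1:ℝ) ≤ (Q ^ s * (1 / Q) ^ A.card) * (2 * (1 - G.card / Q) ^ Z.card) := by
    calc (1:ℝ) = 1 * 1 := by ring
      _ ≤ _ := mul_le_mul ha (by linarith) (by norm_num) (by linarith)
  nlinarith [pow_pos hQ' (Fintype.card X)]

lemma aux_rand {ι X : Type*} [Fintype X] [DecidableEq X] (I : Finset ι) (Q s l : ℕ) (hQ : 0 < Q)
    (G : Finset (Fin Q)) (hG : 2 * l * G.card ≤ Q) (A Z : ι → Finset X) (g : ι → X → Fin Q)
    (hA : ∀ i ∈ I, (A i).card ≤ s) (hZ : ∀ i ∈ I, (Z i).card ≤ l)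
    (hd : ∀ i ∈ I, Disjoint (A i) (Z i)) :
    ∃ h : X → Fin Q, ∃ J : Finset ι, J ⊆ I ∧ (I.card : ℝ) ≤ 2 * Q ^ s * J.card ∧
      ∀ i ∈ J, (∀ a ∈ A i, h a = g i a) ∧ ∀ z ∈ Z i, h z ∉ G := by
  classical
  have hQ' : (0:ℝ) < Q := by exact_mod_cast hQ
  by_contra hcon
  push Not at hcon
  have h1 : ∀ h : X → Fin Q, (2:ℝ) * Q ^ s *
      ((I.filter (fun i => (∀ a ∈ A i, h a = g i a) ∧ ∀ z ∈ Z i, h z ∉ G)).card : ℝ) < I.card := by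
    intro h
    by_contra h2
    push Not at h2
    obtain ⟨i, hi, hi'⟩ := hcon h _ (Finset.filter_subset _ _) h2
    obtain ⟨z, hz, hz'⟩ := hi' (Finset.mem_filter.mp hi).2.1
    exact (Finset.mem_filter.mp hi).2.2 z hz hz'
  have : Nonempty (Fin Q) := ⟨⟨0, hQ⟩⟩
  have h2 : ∑ h : X → Fin Q, (2:ℝ) * Q ^ s *
      ((I.filter (fun i => (∀ a ∈ A i, h a = g i a) ∧ ∀ z ∈ Z i, h z ∉ G)).card : ℝ)
      < ∑ h : X → Fin Q, (I.card : ℝ) :=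
    Finset.sum_lt_sum_of_nonempty Finset.univ_nonempty (fun h _ => h1 h)
  have h3 : ∑ h : X → Fin Q, (2:ℝ) * Q ^ s *
      ((I.filter (fun i => (∀ a ∈ A i, h a = g i a) ∧ ∀ z ∈ Z i, h z ∉ G)).card : ℝ)
      = ∑ i ∈ I, (2:ℝ) * Q ^ s *
      ((Finset.univ.filter (fun h : X → Fin Q => (∀ a ∈ A i, h a = g i a) ∧ ∀ z ∈ Z i, h z ∉ G)).card : ℝ) := by
    rw [← Finset.mul_sum, ← Finset.mul_sum]
    congr 1
    simp only [Finset.card_filter]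
    push_cast
    rw [Finset.sum_comm]
  rw [h3] at h2
  have h4 : ∑ i ∈ I, (Q:ℝ) ^ (Fintype.card X) ≤ ∑ i ∈ I, (2:ℝ) * Q ^ s *
      ((Finset.univ.filter (fun h : X → Fin Q => (∀ a ∈ A i, h a = g i a) ∧ ∀ z ∈ Z i, h z ∉ G)).card : ℝ) :=
    Finset.sum_le_sum (fun i hi => aux_count Q s l hQ G hG (A i) (Z i) (g i) (hA i hi) (hZ i hi) (hd i hi))
  simp at h2 h4
  nlinarith

structure AuxInst {ι α X : Type*} [DecidableEq α] [DecidableEq X] (t b : ℕ) (I : Finset ι)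
    (u v : ι → α → ℝ) (S : ι → Finset α) (π : α → X) (c : ι → ℝ) : Prop where
  card : ∀ i ∈ I, (S i).card ≤ t
  closed : ∀ i ∈ I, ∀ a ∈ S i, ∀ a', π a' = π a → a' ∈ S i
  nb : ∀ i ∈ I, ((S i).image π).card ≤ b
  cnn : ∀ i ∈ I, 0 ≤ c i
  off : ∀ i ∈ I, ∀ j ∈ I, j ≠ i → |∑ k ∈ S i ∩ S j, u i k * v j k| ≤ c i
  diag : ∀ i ∈ I, (2 ^ (S i).card - 1) * c i < ∑ k ∈ S i, u i k * v i k

lemma aux_merge {ι α X : Type*} [DecidableEq α] [DecidableEq X] {t b : ℕ} {I : Finset ι}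
    {u v : ι → α → ℝ} {S : ι → Finset α} {π : α → X} {c : ι → ℝ}
    (h : AuxInst t b I u v S π c) (J : Finset ι) (hJ : J ⊆ I) (ρ : X → X) (b' : ℕ)
    (hcl : ∀ i ∈ J, ∀ C ∈ (S i).image π, ∀ D, ρ D = ρ C → D ∈ (S i).image π)
    (hb : ∀ i ∈ J, (((S i).image π).image ρ).card ≤ b') :
    AuxInst t b' J u v S (fun a => ρ (π a)) c where
  card i hi := h.card i (hJ hi)
  closed i hi a ha a' haa := by
    have := hcl i hi (π a) (Finset.mem_image_of_mem _ ha) (π a') haa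
    obtain ⟨a'', h1, h2⟩ := Finset.mem_image.mp this
    exact h.closed i (hJ hi) a'' h1 a' h2.symm
  nb i hi := by
    have := hb i hi
    rwa [Finset.image_image] at this
  cnn i hi := h.cnn i (hJ hi)
  off i hi j hj := h.off i (hJ hi) j (hJ hj)
  diag i hi := h.diag i (hJ hi)

lemma aux_drop {ι α X : Type*} [Fintype α] [DecidableEq α] [DecidableEq X] {t b : ℕ}
    {I : Finset ι}
    {u v : ι → α → ℝ} {S : ι → Finset α} {π : α → X} {c : ι → ℝ}
    (h : AuxInst t b I u v S π c) (P : X → Finset ι) (hPI : ∀ C, P C ⊆ I)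
    (hPC : ∀ C, ∀ p ∈ P C, C ∈ (S p).image π)
    (hP : ∀ C, ∀ (w : α → ℝ) (c : ℝ), 0 ≤ c →
      (∀ p ∈ P C, |∑ a ∈ Finset.univ.filter (fun a => π a = C), w a * v p a| ≤ c) →
        ∀ i ∈ I, C ∈ (S i).image π →
          |∑ a ∈ Finset.univ.filter (fun a => π a = C), w a * v i a| ≤
            (2 ^ (Finset.univ.filter (fun a => π a = C)).card - 1) * c)
    (J : Finset ι) (hJ : J ⊆ I) (C : ι → X) (hC : ∀ i ∈ J, C i ∈ (S i).image π)
    (hJP : ∀ i ∈ J, ∀ p ∈ P (C i), p ≠ i ∧ ∀ D ∈ (S i).image π, D ∈ (S p).image π → D = C i)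
    (B : X → Prop) (hB : ∀ i ∈ J, ∀ D ∈ (S i).image π, (B D ↔ D = C i)) :
    AuxInst t (b - 1) J u v (fun i => (S i).filter (fun a => π a ≠ C i)) π
      (fun i => 2 ^ (Finset.univ.filter (fun a => π a = C i)).card * c i) := by
  have hfib : ∀ i ∈ I, ∀ D ∈ (S i).image π,
      (S i).filter (fun a => π a = D) = Finset.univ.filter (fun a => π a = D) := by
    intro i hi D hD
    obtain ⟨a, ha, rfl⟩ := Finset.mem_image.mp hD
    ext a'
    simp only [Finset.mem_filter, Finset.mem_univ, true_and, and_iff_right_iff_imp]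
    exact h.closed i hi a ha a'
  have hspan : ∀ i ∈ J, ∀ j ∈ I, C i ∈ (S j).image π →
      |∑ a ∈ Finset.univ.filter (fun a => π a = C i), u i a * v j a| ≤
            (2 ^ (Finset.univ.filter (fun a => π a = C i)).card - 1) * c i := by
    intro i hi j hj hCj
    refine hP (C i) (u i) (c i) (h.cnn i (hJ hi)) ?_ j hj hCj
    intro p hp
    have hpI := hPI _ hp
    obtain ⟨h1, h2⟩ := hJP i hi p hp
    have h3 := h.off i (hJ hi) p hpI h1
    have : S i ∩ S p = Finset.univ.filter (fun a => π a = C i) := by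
      rw [← hfib i (hJ hi) _ (hC i hi)]
      have h4 := hfib p hpI _ (hPC _ p hp)
      ext a
      simp only [Finset.mem_inter, Finset.mem_filter]
      constructor
      · rintro ⟨ha, hb⟩
        exact ⟨ha, h2 _ (Finset.mem_image_of_mem _ ha) (Finset.mem_image_of_mem _ hb)⟩
      · rintro ⟨ha, hb⟩
        refine ⟨ha, ?_⟩
        have : a ∈ (S p).filter (fun a => π a = C i) := by rw [h4]; simp [hb]
        exact (Finset.mem_filter.mp this).1
    rwa [this] at h3
  have hpow : ∀ i, (1:ℝ) ≤ 2 ^ (Finset.univ.filter (fun a => π a = C i)).card :=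
    fun i => one_le_pow₀ (by norm_num)
  refine ⟨?_, ?_, ?_, ?_, ?_, ?_⟩
  · intro i hi
    exact (Finset.card_filter_le _ _).trans (h.card i (hJ hi))
  · intro i hi a ha a' haa
    simp only [Finset.mem_filter] at ha ⊢
    exact ⟨h.closed i (hJ hi) a ha.1 a' haa, by rw [haa]; exact ha.2⟩
  · intro i hi
    have : ((S i).filter (fun a => π a ≠ C i)).image π ⊆ ((S i).image π).erase (C i) := by
      intro D hD
      obtain ⟨a, ha, rfl⟩ := Finset.mem_image.mp hD
      simp only [Finset.mem_filter] at ha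
      exact Finset.mem_erase.mpr ⟨ha.2, Finset.mem_image_of_mem _ ha.1⟩
    refine (Finset.card_le_card this).trans ?_
    rw [Finset.card_erase_of_mem (hC i hi)]
    have := h.nb i (hJ hi)
    omega
  · intro i hi
    have := h.cnn i (hJ hi)
    positivity
  · intro i hi j hj hne
    have e : (S i).filter (fun a => π a ≠ C i) ∩ (S j).filter (fun a => π a ≠ C j)
        = (S i ∩ S j).filter (fun a => ¬ (π a = C i)) := by
      ext a
      simp only [Finset.mem_inter, Finset.mem_filter]
      constructor
      · rintro ⟨⟨h1, h2⟩, h3, h4⟩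
        exact ⟨⟨h1, h3⟩, h2⟩
      · rintro ⟨⟨h1, h3⟩, h2⟩
        refine ⟨⟨h1, h2⟩, h3, ?_⟩
        intro h5
        have := (hB j hj _ (Finset.mem_image_of_mem _ h3)).mpr h5
        exact h2 ((hB i hi _ (Finset.mem_image_of_mem _ h1)).mp this)
    simp only [e]
    have hs := Finset.sum_filter_add_sum_filter_not (S i ∩ S j) (fun a => π a = C i)
      (fun a => u i a * v j a)
    have ho := h.off i (hJ hi) j (hJ hj) hne
    have hc0 := h.cnn i (hJ hi)
    have hb : |∑ a ∈ (S i ∩ S j).filter (fun a => π a = C i), u i a * v j a| ≤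
        (2 ^ (Finset.univ.filter (fun a => π a = C i)).card - 1) * c i := by
      by_cases hm : C i ∈ (S j).image π
      · have : (S i ∩ S j).filter (fun a => π a = C i) =
            Finset.univ.filter (fun a => π a = C i) := by
          rw [Finset.filter_inter_distrib, hfib i (hJ hi) _ (hC i hi), hfib j (hJ hj) _ hm,
            Finset.inter_self]
        rw [this]
        exact hspan i hi j (hJ hj) hm
      · have : (S i ∩ S j).filter (fun a => π a = C i) = ∅ := by
          apply Finset.filter_eq_empty_iff.mpr
          intro a ha h'
          exact hm (h' ▸ Finset.mem_image_of_mem _ (Finset.mem_inter.mp ha).2)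
        rw [this]
        simp only [Finset.sum_empty, abs_zero]
        exact mul_nonneg (by linarith [hpow i]) hc0
    have : ∑ a ∈ (S i ∩ S j).filter (fun a => ¬ (π a = C i)), u i a * v j a
      = ∑ a ∈ S i ∩ S j, u i a * v j a -
        ∑ a ∈ (S i ∩ S j).filter (fun a => π a = C i), u i a * v j a := by linarith
    rw [this]
    refine (abs_sub _ _).trans ?_
    linarith
  · intro i hi
    have hs := Finset.sum_filter_add_sum_filter_not (S i) (fun a => π a = C i)
      (fun a => u i a * v i a)
    have hcard := Finset.card_filter_add_card_filter_not (s := S i) (fun a => π a = C i)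
    rw [hfib i (hJ hi) _ (hC i hi)] at hs hcard
    have hd := h.diag i (hJ hi)
    have h1 := (abs_le.mp (hspan i hi i (hJ hi) (hC i hi))).2
    rw [← hcard, pow_add] at hd
    simp only [ne_eq]
    nlinarith

lemma aux_orbit {X : Type*} [DecidableEq X] (T : Finset X) (hT : T.Nonempty) (g : X → X)
    (hg : ∀ x ∈ T, g x ∈ T) : ∃ A ⊆ T, A.Nonempty ∧ (∀ x ∈ A, g x ∈ A) ∧
      ∀ x ∈ A, ∀ y ∈ A, Relation.ReflTransGen (fun x y => x ∈ A ∧ y = g x) x y := by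
  classical
  obtain ⟨A, hA, hmin⟩ := Finset.exists_min_image
    (T.powerset.filter (fun A => A.Nonempty ∧ ∀ x ∈ A, g x ∈ A)) Finset.card
    ⟨T, by simp [hT]; exact hg⟩
  simp only [Finset.mem_filter, Finset.mem_powerset] at hA hmin
  refine ⟨A, hA.1, hA.2.1, hA.2.2, ?_⟩
  intro x hx y hy
  let A' := A.filter (fun y => Relation.ReflTransGen (fun x y => x ∈ A ∧ y = g x) x y)
  have h1 := hmin A' ⟨(Finset.filter_subset _ _).trans hA.1, ⟨x, by
      simp only [A', Finset.mem_filter]; exact ⟨hx, Relation.ReflTransGen.refl⟩⟩, by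
      intro z hz
      simp only [A', Finset.mem_filter] at hz ⊢
      exact ⟨hA.2.2 z hz.1, hz.2.tail ⟨hz.1, rfl⟩⟩⟩
  have h2 : A' = A := Finset.eq_of_subset_of_card_le (Finset.filter_subset _ _) h1
  rw [← h2] at hy
  exact (Finset.mem_filter.mp hy).2

/-- classes of mutual reachability -/
lemma aux_scc {X : Type*} (step : X → X → Prop) : ∃ ρ : X → X, ∀ x y, ρ x = ρ y ↔
    (Relation.ReflTransGen step x y ∧ Relation.ReflTransGen step y x) := by
  let s : Setoid X := ⟨fun x y => Relation.ReflTransGen step x y ∧ Relation.ReflTransGen step y x,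
    ⟨fun x => ⟨.refl, .refl⟩, fun h => ⟨h.2, h.1⟩,
      fun h1 h2 => ⟨h1.1.trans h2.1, h2.2.trans h1.2⟩⟩⟩
  refine ⟨fun x => (Quotient.mk s x).out, fun x y => ?_⟩
  constructor
  · intro h
    change (Quotient.mk s x).out = (Quotient.mk s y).out at h
    have : Quotient.mk s x = Quotient.mk s y := by
      rw [← Quotient.out_eq (Quotient.mk s x), h, Quotient.out_eq]
    exact Quotient.exact this
  · intro h
    have : Quotient.mk s x = Quotient.mk s y := Quotient.sound h
    simp only [this]

lemma aux_dec {X : Type*} [DecidableEq X] (C : X) (R : Finset X) (Q q : ℕ) (hq : q ≤ Q)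
    (hR : R.card ≤ q) : ∃ dec : Fin Q → X, ∀ D ∈ R, ∃ k : Fin Q, k.val < q ∧ dec k = D := by
  refine ⟨fun k => if h : k.val < R.card then (R.equivFin.symm ⟨k.val, h⟩ : X) else C, ?_⟩
  intro D hD
  have h1 := (R.equivFin ⟨D, hD⟩).isLt
  refine ⟨⟨(R.equivFin ⟨D, hD⟩).val, by omega⟩, by simp; omega, ?_⟩
  simp

lemma aux_main {ι α X : Type*} [DecidableEq ι] [Fintype α] [DecidableEq α] [Fintype X]
    [DecidableEq X] (t : ℕ) (ht : 1 ≤ t) : ∀ (b : ℕ) (I : Finset ι)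
    (u v : ι → α → ℝ) (S : ι → Finset α) (π : α → X) (c : ι → ℝ),
    AuxInst t b I u v S π c → (I.card : ℝ) ≤ (8 * (t:ℝ) ^ 4) ^ (2 * b) * Fintype.card α := by
  intro b
  induction b using Nat.strong_induction_on with
  | _ b IH =>
  intro I u v S π c hI
  classical
  have htr : (1:ℝ) ≤ t := by exact_mod_cast ht
  have hSne : ∀ i ∈ I, (S i).Nonempty := by
    intro i hi
    by_contra hne
    rw [Finset.not_nonempty_iff_eq_empty] at hne
    have := hI.diag i hi
    rw [hne] at this
    simp at this
  set T : ι → Finset X := fun i => (S i).image π with hTdef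
  have hTne : ∀ i ∈ I, (T i).Nonempty := fun i hi => (hSne i hi).image π
  have hTt : ∀ i ∈ I, (T i).card ≤ t := fun i hi => Finset.card_image_le.trans (hI.card i hi)
  rcases I.eq_empty_or_nonempty with rfl | ⟨i0, hi0⟩
  · simp; positivity
  have hb1 : 1 ≤ b := by
    have h1 := hI.nb i0 hi0
    have h2 := (hTne i0 hi0).card_pos
    simp only [hTdef] at h2
    omega
  choose P hPs hPcard hPsp using fun C : X =>
    aux_spanner (Finset.univ.filter (fun a => π a = C)) (I.filter (fun i => C ∈ T i)) v
  have hPI : ∀ C, P C ⊆ I := fun C => (hPs C).trans (Finset.filter_subset _ _)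
  have hPC : ∀ C, ∀ p ∈ P C, C ∈ T p := fun C p hp => (Finset.mem_filter.mp (hPs C hp)).2
  have hPt : ∀ C, (P C).card ≤ t := by
    intro C
    rcases (P C).eq_empty_or_nonempty with h | ⟨p, hp⟩
    · rw [h]; simp
    · refine (hPcard C).trans (le_trans (Finset.card_le_card ?_) (hI.card p (hPI C hp)))
      intro a ha
      obtain ⟨a', h1, h2⟩ := Finset.mem_image.mp (hPC C p hp)
      exact hI.closed p (hPI C hp) a' h1 a (by rw [h2]; exact (Finset.mem_filter.mp ha).2)
  set PP := Finset.univ.biUnion P with hPP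
  have hPPcard : PP.card ≤ Fintype.card α := by
    calc PP.card ≤ ∑ C, (P C).card := Finset.card_biUnion_le
      _ ≤ ∑ C, (Finset.univ.filter (fun a => π a = C)).card := Finset.sum_le_sum (fun C _ => hPcard C)
      _ = Fintype.card α := by
        rw [← Finset.card_univ]
        exact (Finset.card_eq_sum_card_fiberwise (fun a _ => Finset.mem_univ (π a))).symm
  set R : X → Finset X := fun C => (P C).biUnion T with hR
  have hRcard : ∀ C, (R C).card ≤ t ^ 2 := by
    intro C
    refine (Finset.card_biUnion_le_card_mul _ _ t (fun p hp => hTt p (hPI C hp))).trans ?_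
    rw [pow_two]
    exact Nat.mul_le_mul_right _ (hPt C)
  set I' := I \ PP with hI'
  have hstruct : ∀ i, ∃ (A : Finset X) (d : X → X), i ∈ I' → (A ⊆ T i ∧ A.Nonempty ∧
      ((∃ C, A = {C} ∧ ∀ D ∈ T i, D ∈ R C → D = C) ∨
       (2 ≤ A.card ∧ (∀ x ∈ A, d x ∈ A ∧ d x ∈ R x) ∧
        ∀ x ∈ A, ∀ y ∈ A, Relation.ReflTransGen (fun x y => x ∈ A ∧ y = d x) x y))) := by
    intro i
    by_cases hi : i ∈ I'
    swap
    · exact ⟨∅, id, fun h => absurd h hi⟩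
    have hiI : i ∈ I := (Finset.mem_sdiff.mp hi).1
    by_cases hg : ∃ C ∈ T i, ∀ D ∈ T i, D ∈ R C → D = C
    · obtain ⟨C, hC, hg⟩ := hg
      exact ⟨{C}, id, fun _ => ⟨by simpa using hC, by simp, Or.inl ⟨C, rfl, hg⟩⟩⟩
    · push Not at hg
      choose! d hd1 hd2 hd3 using hg
      obtain ⟨A, hA1, hA2, hA3, hA4⟩ := aux_orbit (T i) (hTne i hiI) d hd1
      refine ⟨A, d, fun _ => ⟨hA1, hA2, Or.inr ⟨?_, ?_, hA4⟩⟩⟩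
      · obtain ⟨x, hx⟩ := hA2
        exact Finset.one_lt_card.mpr ⟨d x, hA3 x hx, x, hx, hd3 x (hA1 hx)⟩
      · intro x hx
        exact ⟨hA3 x hx, hd2 x (hA1 hx)⟩
  choose A d hA using hstruct
  have hI'I : I' ⊆ I := Finset.sdiff_subset
  rcases I'.eq_empty_or_nonempty with hI'e | hI'ne
  · have h1 : I.card ≤ PP.card := Finset.card_le_card (Finset.sdiff_eq_empty_iff_subset.mp hI'e)
    have h2 : (I.card : ℝ) ≤ Fintype.card α := by exact_mod_cast h1.trans hPPcard
    have h3 : (1:ℝ) ≤ (8 * (t:ℝ) ^ 4) ^ (2 * b) := by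
      refine one_le_pow₀ ?_
      have : (1:ℝ) ≤ (t:ℝ) ^ 4 := one_le_pow₀ htr
      linarith
    refine h2.trans ?_
    have hn : (0:ℝ) ≤ Fintype.card α := by positivity
    nlinarith
  -- pigeonhole on the size of `A i`
  obtain ⟨m, hm, hmI⟩ : ∃ m ∈ Finset.Icc 1 t, (I'.card : ℝ) / t ≤
      ((I'.filter (fun i => (A i).card = m)).card : ℝ) := by
    refine Finset.exists_le_card_fiber_of_nsmul_le_card_of_maps_to (f := fun i => (A i).card) ?_ ?_ ?_
    · intro i hi
      have := hA i hi
      rw [Finset.mem_Icc]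
      exact ⟨this.2.1.card_pos, (Finset.card_le_card this.1).trans (hTt i (hI'I hi))⟩
    · exact ⟨1, by simp [ht]⟩
    · simp
      field_simp
      rfl
  rw [Finset.mem_Icc] at hm
  set Im := I'.filter (fun i => (A i).card = m) with hIm
  have hImI : Im ⊆ I := (Finset.filter_subset _ _).trans hI'I
  have hImI' : Im ⊆ I' := Finset.filter_subset _ _
  have hImm : ∀ i ∈ Im, (A i).card = m := fun i hi => (Finset.mem_filter.mp hi).2
  have hmb : m ≤ b := by
    have h1 : (0:ℝ) < Im.card := by
      refine lt_of_lt_of_le ?_ hmI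
      have : (0:ℝ) < I'.card := by exact_mod_cast hI'ne.card_pos
      positivity
    have h2 : 0 < Im.card := by exact_mod_cast h1
    obtain ⟨j, hj⟩ := Finset.card_pos.mp h2
    rw [← hImm j hj]
    exact (Finset.card_le_card (hA j (hImI' hj)).1).trans (hI.nb j (hImI hj))
  set Q := 2 * t ^ 3 with hQ
  have hQpos : 0 < Q := by positivity
  have hqQ : t ^ 2 ≤ Q := by
    have : t ^ 2 ≤ t ^ 3 := Nat.pow_le_pow_right ht (by norm_num)
    omega
  choose dec hdec using fun C : X => aux_dec C (R C) Q (t ^ 2) hqQ (hRcard C)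
  have : Nonempty (Fin Q) := ⟨⟨0, hQpos⟩⟩
  choose! code hcode1 hcode2 using hdec
  let G : Finset (Fin Q) := Finset.univ.filter (fun k => k.val < t ^ 2)
  have hGcard : G.card ≤ t ^ 2 := by
    have : G.card ≤ (Finset.range (t^2)).card :=
      Finset.card_le_card_of_injOn (fun k => k.val) (by intro k hk; simpa [G] using hk)
        (fun a _ b _ h => Fin.ext h)
    simpa using this
  have hGQ : 2 * t * G.card ≤ Q := by
    calc 2 * t * G.card ≤ 2 * t * t ^ 2 := Nat.mul_le_mul_left _ hGcard
      _ = Q := by rw [hQ]; ring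
  -- the final arithmetic
  have hfinal : ∀ (J : Finset ι) (b' : ℕ), 2 * b' + m ≤ 2 * b → (Im.card : ℝ) ≤ 2 * Q ^ m * J.card →
      (J.card : ℝ) ≤ (8 * (t:ℝ) ^ 4) ^ (2 * b') * Fintype.card α →
      (I.card : ℝ) ≤ (8 * (t:ℝ) ^ 4) ^ (2 * b) * Fintype.card α := by
    intro J b' hb' h1 h2
    set K := 8 * (t:ℝ) ^ 4 with hK
    have hK8 : 8 ≤ K := by
      have : (1:ℝ) ≤ (t:ℝ) ^ 4 := one_le_pow₀ htr
      linarith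
    have hn : (0:ℝ) ≤ Fintype.card α := by positivity
    have hc1 : (I.card : ℝ) ≤ Fintype.card α + I'.card := by
      have : I.card ≤ PP.card + I'.card := by
        have h3 : I.card - PP.card ≤ I'.card := Finset.le_card_sdiff PP I
        omega
      have : I.card ≤ Fintype.card α + I'.card := by omega
      exact_mod_cast this
    have hc2 : (I'.card : ℝ) ≤ t * Im.card := by
      rw [div_le_iff₀ (by linarith)] at hmI
      linarith
    have hKm : (4:ℝ) * t * Q ^ m ≤ K ^ m := by
      have hKQ : K = (4 * t) * Q := by rw [hK, hQ]; push_cast; ring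
      rw [hKQ, mul_pow]
      have : (4 * t : ℝ) ≤ (4 * t) ^ m := le_self_pow₀ (by linarith) (by omega)
      gcongr
    have hc3 : (I'.card : ℝ) ≤ K ^ (2 * b) / 2 * Fintype.card α := by
      calc (I'.card : ℝ) ≤ t * (2 * Q ^ m * (K ^ (2 * b') * Fintype.card α)) := by
            refine hc2.trans ?_
            refine mul_le_mul_of_nonneg_left (h1.trans ?_) (by linarith)
            exact mul_le_mul_of_nonneg_left h2 (by positivity)
        _ = (4 * t * Q ^ m) * K ^ (2 * b') / 2 * Fintype.card α := by ring
        _ ≤ K ^ m * K ^ (2 * b') / 2 * Fintype.card α := by gcongr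
        _ ≤ K ^ (2 * b) / 2 * Fintype.card α := by
            rw [← pow_add]
            have : K ^ (m + 2 * b') ≤ K ^ (2 * b) := pow_le_pow_right₀ (by linarith) (by omega)
            gcongr
    have hc4 : 2 ≤ K ^ (2 * b) := by
      have : K ≤ K ^ (2 * b) := le_self_pow₀ (by linarith) (by omega)
      linarith
    nlinarith
  have hdisj : ∀ i ∈ Im, Disjoint (A i) (T i \ A i) := fun i _ => Finset.disjoint_sdiff
  have hZ : ∀ i ∈ Im, (T i \ A i).card ≤ t := fun i hi =>
    (Finset.card_le_card Finset.sdiff_subset).trans (hTt i (hImI hi))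
  by_cases hm1 : m = 1
  · -- drop
    have hgood : ∀ i, ∃ C, i ∈ Im → A i = {C} ∧ ∀ D ∈ T i, D ∈ R C → D = C := by
      intro i
      by_cases hi : i ∈ Im
      · have h1 := hA i (hImI' hi)
        rcases h1.2.2 with ⟨C, h2, h3⟩ | ⟨h2, _⟩
        · exact ⟨C, fun _ => ⟨h2, h3⟩⟩
        · have := hImm i hi
          omega
      · obtain ⟨x, hx⟩ := hTne i0 hi0
        exact ⟨x, fun h => absurd h hi⟩
    choose C hC using hgood
    obtain ⟨h, J, hJ, hJc, hJp⟩ := aux_rand Im Q m t hQpos G hGQ A (fun i => T i \ A i)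
      (fun _ _ => ⟨0, hQpos⟩) (fun i hi => (hImm i hi).le) hZ hdisj
    refine hfinal J (b - 1) (by omega) hJc ?_
    refine IH (b - 1) (by omega) J u v _ π _ (aux_drop hI P hPI hPC ?_ J (hJ.trans hImI) C ?_ ?_
      (fun D => h D ∈ G) ?_)
    · intro C w c hc hp i hi hCi
      exact hPsp C w c hc hp i (Finset.mem_filter.mpr ⟨hi, hCi⟩)
    · intro i hi
      have h1 := (hA i (hImI' (hJ hi))).1
      rw [(hC i (hJ hi)).1] at h1
      exact h1 (Finset.mem_singleton_self _)
    · intro i hi p hp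
      refine ⟨?_, fun D hD hDp => (hC i (hJ hi)).2 D hD ?_⟩
      · rintro rfl
        have := (Finset.mem_sdiff.mp (hImI' (hJ hi))).2
        exact this (Finset.mem_biUnion.mpr ⟨_, Finset.mem_univ _, hp⟩)
      · exact Finset.mem_biUnion.mpr ⟨p, hp, hDp⟩
    · intro i hi D hD
      have h1 := hJp i hi
      have h2 := (hC i (hJ hi)).1
      constructor
      · intro h3
        by_contra h4
        exact h1.2 D (Finset.mem_sdiff.mpr ⟨hD, by rw [h2]; simpa using h4⟩) h3
      · rintro rfl
        rw [h1.1 (C i) (by rw [h2]; simp)]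
        simp only [G, Finset.mem_filter, Finset.mem_univ, true_and]
        positivity
  · -- merge
    have hmer : ∀ i ∈ Im, (∀ x ∈ A i, d i x ∈ A i ∧ d i x ∈ R x) ∧
        ∀ x ∈ A i, ∀ y ∈ A i, Relation.ReflTransGen (fun x y => x ∈ A i ∧ y = d i x) x y := by
      intro i hi
      have h1 := hA i (hImI' hi)
      rcases h1.2.2 with ⟨C, h2, h3⟩ | ⟨h2, h3⟩
      · have := hImm i hi
        rw [h2] at this
        simp at this
        omega
      · exact h3
    obtain ⟨h, J, hJ, hJc, hJp⟩ := aux_rand Im Q m t hQpos G hGQ A (fun i => T i \ A i)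
      (fun i x => code x (d i x)) (fun i hi => (hImm i hi).le) hZ hdisj
    refine hfinal J (b + 1 - m) ?_ hJc ?_
    · omega
    obtain ⟨ρ, hρ⟩ := aux_scc (fun x y => h x ∈ G ∧ y = dec x (h x))
    have hstepA : ∀ i ∈ J, ∀ x ∈ A i, h x ∈ G ∧ d i x = dec x (h x) := by
      intro i hi x hx
      have h1 := ((hmer i (hJ hi)).1 x hx).2
      rw [(hJp i hi).1 x hx]
      refine ⟨?_, (hcode2 x _ h1).symm⟩
      simp only [G, Finset.mem_filter, Finset.mem_univ, true_and]
      exact hcode1 x _ h1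
    refine IH (b + 1 - m) (by omega) J u v S (fun a => ρ (π a)) c
      (aux_merge hI J (hJ.trans hImI) ρ _ ?_ ?_)
    · intro i hi C hC D hD
      have hcl : ∀ D, Relation.ReflTransGen (fun x y => h x ∈ G ∧ y = dec x (h x)) C D →
          D ∈ T i := by
        intro D hr
        induction hr with
        | refl => exact hC
        | @tail y z hxy hstep ih =>
          have hyA : y ∈ A i := by
            by_contra hn
            exact (hJp i hi).2 y (Finset.mem_sdiff.mpr ⟨ih, hn⟩) hstep.1
          rw [hstep.2, ← (hstepA i hi y hyA).2]
          exact (hA i (hImI' (hJ hi))).1 ((hmer i (hJ hi)).1 y hyA).1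
      exact hcl D ((hρ D C).mp hD).2
    · intro i hi
      have hAT := (hA i (hImI' (hJ hi))).1
      have hnb := hI.nb i (hImI (hJ hi))
      have e : (S i).image π = (T i \ A i) ∪ A i := (Finset.sdiff_union_of_subset hAT).symm
      rw [e, Finset.image_union]
      refine (Finset.card_union_le _ _).trans ?_
      have h1 : ((A i).image ρ).card ≤ 1 := by
        rw [Finset.card_le_one]
        intro x hx y hy
        obtain ⟨x', hx', rfl⟩ := Finset.mem_image.mp hx
        obtain ⟨y', hy', rfl⟩ := Finset.mem_image.mp hy
        have hr : ∀ x ∈ A i, ∀ y ∈ A i,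
            Relation.ReflTransGen (fun x y => h x ∈ G ∧ y = dec x (h x)) x y := by
          intro x hx y hy
          refine Relation.ReflTransGen.mono ?_ _ _ ((hmer i (hJ hi)).2 x hx y hy)
          rintro x y ⟨h1, rfl⟩
          exact hstepA i hi x h1
        exact (hρ x' y').mpr ⟨hr x' hx' y' hy', hr y' hy' x' hx'⟩
      have h2 : ((T i \ A i).image ρ).card ≤ (T i).card - m := by
        refine Finset.card_image_le.trans ?_
        rw [Finset.card_sdiff_of_subset hAT, hImm i (hJ hi)]
      have h3 : m ≤ (T i).card := by
        rw [← hImm i (hJ hi)]; exact Finset.card_le_card hAT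
      have h4 : (T i).card ≤ b := hnb
      omega

lemma aux_dual {n N : ℕ} (v : Fin N → Fin n → ℝ) (i : Fin N) (B E : ℝ) (hB : 0 < B) (hE : 0 ≤ E)
    (h : ∀ x : Fin N → ℝ, l1norm x ≤ B →
      E < l2norm (v i - ∑ j ∈ Finset.univ.erase i, x j • v j)) :
    ∃ (u : Fin n → ℝ) (c : ℝ), 0 ≤ c ∧ ∑ k, u k ^ 2 ≤ 1 ∧
      (∀ j, j ≠ i → |∑ k, u k * v j k| ≤ c) ∧ E + B * c < ∑ k, u k * v i k := by
  let L : (Fin N → ℝ) →ₗ[ℝ] EuclideanSpace ℝ (Fin n) :=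
    { toFun := fun x => WithLp.toLp 2 (∑ j ∈ Finset.univ.erase i, x j • v j)
      map_add' := by
        intro x y
        rw [← WithLp.toLp_add]
        simp [add_smul, Finset.sum_add_distrib]
      map_smul' := by
        intro r x
        rw [RingHom.id_apply, ← WithLp.toLp_smul]
        congr 1
        rw [Finset.smul_sum]
        exact Finset.sum_congr rfl (fun j _ => by rw [Pi.smul_apply, smul_eq_mul, mul_smul]) }
  have hL : ∀ x, L x = WithLp.toLp 2 (∑ j ∈ Finset.univ.erase i, x j • v j) := fun x => rfl
  let D : Set (Fin N → ℝ) := {x | l1norm x ≤ B}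
  have hDc : IsCompact D := by
    refine Metric.isCompact_of_isClosed_isBounded ?_ ?_
    · refine isClosed_le ?_ continuous_const
      unfold l1norm
      fun_prop
    · refine (Metric.isBounded_closedBall (x := (0 : Fin N → ℝ)) (r := B)).subset ?_
      intro x hx
      rw [mem_closedBall_zero_iff, pi_norm_le_iff_of_nonneg hB.le]
      intro j
      refine le_trans ?_ (show l1norm x ≤ B from hx)
      exact Finset.single_le_sum (f := fun j => |x j|) (fun j _ => abs_nonneg _) (Finset.mem_univ j)
  have hDconv : Convex ℝ D := by
    intro x hx y hy a b ha hb hab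
    change l1norm _ ≤ B
    have hx' : l1norm x ≤ B := hx
    have hy' : l1norm y ≤ B := hy
    have : l1norm (a • x + b • y) ≤ a * l1norm x + b * l1norm y := by
      unfold l1norm
      rw [Finset.mul_sum, Finset.mul_sum, ← Finset.sum_add_distrib]
      refine Finset.sum_le_sum (fun j _ => ?_)
      simp only [Pi.add_apply, Pi.smul_apply, smul_eq_mul]
      refine (abs_add_le _ _).trans ?_
      rw [abs_mul, abs_mul, abs_of_nonneg ha, abs_of_nonneg hb]
    have h2 : B = a * B + b * B := by rw [← add_mul, hab, one_mul]
    rw [h2]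
    refine this.trans ?_
    gcongr
  have h0D : (0 : Fin N → ℝ) ∈ D := by
    change l1norm _ ≤ B
    simp [l1norm, hB.le]
  have hKc : IsComplete (Set.image L D) :=
    (hDc.image (LinearMap.continuous_of_finiteDimensional L)).isComplete
  have hKconv : Convex ℝ (Set.image L D) := hDconv.linear_image L
  obtain ⟨z, hzK, hz⟩ := exists_norm_eq_iInf_of_complete_convex
    (⟨L 0, Set.mem_image_of_mem _ h0D⟩ : (Set.image L D).Nonempty) hKc hKconv (WithLp.toLp 2 (v i))
  rw [norm_eq_iInf_iff_real_inner_le_zero hKconv hzK] at hz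
  obtain ⟨x0, hx0, rfl⟩ := hzK
  set r : EuclideanSpace ℝ (Fin n) := WithLp.toLp 2 (v i) - L x0 with hr
  have hrn : E < ‖r‖ := by
    have := h x0 hx0
    rw [EuclideanSpace.norm_eq]
    unfold l2norm at this
    convert this using 3
    simp [hr, hL]
  have hrpos : 0 < ‖r‖ := by linarith
  have hin : ∀ j, inner ℝ r (WithLp.toLp 2 (v j)) = ∑ k, r k * v j k := by
    intro j
    simp [PiLp.inner_apply, mul_comm]
  have hz0 : 0 ≤ inner ℝ r (L x0) := by
    have := hz (L 0) (Set.mem_image_of_mem _ h0D)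
    rw [map_zero, zero_sub, inner_neg_right] at this
    linarith
  have hzj : ∀ j, j ≠ i → ∀ s : ℝ, |s| ≤ B → s * ∑ k, r k * v j k ≤ inner ℝ r (L x0) := by
    intro j hj s hs
    have hm : Pi.single j s ∈ D := by
      change l1norm _ ≤ B
      unfold l1norm
      rw [Finset.sum_eq_single j]
      · simpa using hs
      · intro b _ hb
        simp [hb]
      · simp
    have := hz (L (Pi.single j s)) (Set.mem_image_of_mem _ hm)
    have e : L (Pi.single j s) = s • WithLp.toLp 2 (v j) := by
      rw [hL, ← WithLp.toLp_smul]
      congr 1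
      rw [Finset.sum_eq_single j]
      · simp
      · intro b _ hb
        simp [hb]
      · intro h; exact absurd (Finset.mem_erase.mpr ⟨hj, Finset.mem_univ _⟩) h
    rw [inner_sub_right, e, inner_smul_right, hin] at this
    linarith
  have hri : ∑ k, r k * v i k = ‖r‖ ^ 2 + inner ℝ r (L x0) := by
    rw [← hin, ← real_inner_self_eq_norm_sq, ← inner_add_right]
    simp [hr]
  refine ⟨fun k => r k / ‖r‖, inner ℝ r (L x0) / (B * ‖r‖), by positivity, ?_, ?_, ?_⟩
  · simp only [div_pow]
    rw [← Finset.sum_div, ← EuclideanSpace.real_norm_sq_eq, div_self (by positivity)]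
  · intro j hj
    have e : ∑ k, r k / ‖r‖ * v j k = (∑ k, r k * v j k) / ‖r‖ := by
      rw [Finset.sum_div]
      exact Finset.sum_congr rfl (fun k _ => by ring)
    rw [e, abs_div, abs_of_pos hrpos, div_le_div_iff₀ hrpos (by positivity)]
    have h1 := hzj j hj B (by rw [abs_of_pos hB])
    have h2 := hzj j hj (-B) (by rw [abs_neg, abs_of_pos hB])
    have : |∑ k, r k * v j k| * B ≤ inner ℝ r (L x0) := by
      rcases abs_cases (∑ k, r k * v j k) with ⟨h3, _⟩ | ⟨h3, _⟩ <;> rw [h3] <;> linarith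
    nlinarith
  · have e : ∑ k, r k / ‖r‖ * v i k = (∑ k, r k * v i k) / ‖r‖ := by
      rw [Finset.sum_div]
      exact Finset.sum_congr rfl (fun k _ => by ring)
    rw [e, hri]
    have : (‖r‖ ^ 2 + inner ℝ r (L x0)) / ‖r‖ = ‖r‖ + inner ℝ r (L x0) / ‖r‖ := by
      field_simp
    rw [this]
    have : B * (inner ℝ r (L x0) / (B * ‖r‖)) = inner ℝ r (L x0) / ‖r‖ := by
      field_simp
    rw [this]
    linarith

lemma aux_arith (t : ℕ) (ht : 1 ≤ t) :
    (2:ℝ) * (128 * 4 ^ t * (t:ℝ) ^ 9) ^ t < 4 ^ ((t + 2) * (4 * t)) := by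
  have h1 : ∀ s : ℕ, s ^ 2 ≤ 2 ^ (s + 1) := by
    intro s
    induction s with
    | zero => norm_num
    | succ s ih =>
      rcases Nat.lt_or_ge s 3 with h | h
      · interval_cases s <;> norm_num
      · rw [pow_succ 2 (s + 1)]
        nlinarith
  have h2 : (t:ℝ) ^ 2 ≤ 2 ^ (t + 1) := by exact_mod_cast h1 t
  have htr : (1:ℝ) ≤ t := by exact_mod_cast ht
  have h3 : (t:ℝ) ^ 9 ≤ 32 * 32 ^ t := by
    calc (t:ℝ) ^ 9 ≤ (t:ℝ) ^ 10 := pow_le_pow_right₀ htr (by norm_num)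
      _ = ((t:ℝ) ^ 2) ^ 5 := by ring
      _ ≤ (2 ^ (t + 1)) ^ 5 := by gcongr
      _ = 32 * 32 ^ t := by
        rw [← pow_mul, add_mul, pow_add, mul_comm t 5, pow_mul]; norm_num; ring
  have h4 : (2:ℝ) ≤ 2 ^ t := le_self_pow₀ (by norm_num) (by omega)
  have e : (4:ℝ) ^ ((t + 2) * (4 * t)) = (65536 * 256 ^ t) ^ t := by
    rw [show (t + 2) * (4 * t) = (8 + 4 * t) * t by ring, pow_mul, pow_add, pow_mul]
    norm_num
  rw [e]
  calc (2:ℝ) * (128 * 4 ^ t * (t:ℝ) ^ 9) ^ t ≤ 2 ^ t * (128 * 4 ^ t * (t:ℝ) ^ 9) ^ t := by gcongr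
    _ = (2 * (128 * 4 ^ t * (t:ℝ) ^ 9)) ^ t := by rw [mul_pow 2]
    _ < (65536 * 256 ^ t) ^ t := by
      refine pow_lt_pow_left₀ ?_ (by positivity) (by omega)
      calc 2 * (128 * 4 ^ t * (t:ℝ) ^ 9) ≤ 2 * (128 * 4 ^ t * (32 * 32 ^ t)) := by gcongr
        _ = 8192 * 128 ^ t := by
          rw [show (128:ℝ) = 4 * 32 by norm_num, mul_pow]; ring
        _ < 65536 * 256 ^ t := by
          have : (128:ℝ) ^ t ≤ 256 ^ t := by gcongr; norm_num
          have : (0:ℝ) < 256 ^ t := by positivity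
          linarith

/-- among enough sparse real vectors, one is efficiently approximated
by the others. -/
theorem stmt13 (n N t : ℕ) (ht : 1 ≤ t) (hN : 1 ≤ N)
    (v : Fin N → Fin n → ℝ) (hsp : ∀ i, SparseVec t (v i)) :
    ∃ (i : Fin N) (x : Fin N → ℝ), l1norm x ≤ 3 ^ t ∧
      l2norm (v i - ∑ j ∈ Finset.univ.erase i, x j • v j) ≤
        4 ^ (t + 2) * Real.sqrt t * ((n : ℝ) / N) ^ ((1 : ℝ) / (4 * t)) *
          ⨆ j, ⨆ k, |v j k| := by
  classical
  by_contra hcon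
  push Not at hcon
  set M : ℝ := ⨆ j, ⨆ k, |v j k| with hMdef
  have hM : ∀ j k, |v j k| ≤ M := by
    intro j k
    have h1 : |v j k| ≤ ⨆ k, |v j k| := le_ciSup (f := fun k => |v j k|) (Set.finite_range _).bddAbove k
    have h2 : (⨆ k, |v j k|) ≤ M := le_ciSup (f := fun j => ⨆ k, |v j k|) (Set.finite_range _).bddAbove j
    exact h1.trans h2
  have hM0 : 0 ≤ M := Real.iSup_nonneg (fun j => Real.iSup_nonneg (fun k => abs_nonneg _))
  set ρ : ℝ := 4 ^ (t + 2) * ((n : ℝ) / N) ^ ((1 : ℝ) / (4 * t)) with hρ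
  have htr : (1:ℝ) ≤ t := by exact_mod_cast ht
  have hNr : (1:ℝ) ≤ N := by exact_mod_cast hN
  have hsq : (0:ℝ) < Real.sqrt t := Real.sqrt_pos.mpr (by linarith)
  have hρ0 : 0 ≤ ρ := by positivity
  have hE : (4:ℝ) ^ (t + 2) * Real.sqrt t * ((n : ℝ) / N) ^ ((1 : ℝ) / (4 * t)) * M
      = Real.sqrt t * ρ * M := by rw [hρ]; ring
  rw [hE] at hcon
  let S : Fin N → Finset (Fin n) := fun i => Finset.univ.filter (fun k => v i k ≠ 0)
  have hS : ∀ i, (S i).card ≤ t := by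
    intro i
    have := hsp i
    unfold SparseVec at this
    rw [Set.ncard_eq_toFinset_card'] at this
    convert this using 2
    ext k
    simp [S]
  have hS0 : ∀ i k, k ∉ S i → v i k = 0 := by
    intro i k hk
    by_contra h
    exact hk (by simp [S, h])
  -- the trivial approximation
  let i0 : Fin N := ⟨0, hN⟩
  have hlow : Real.sqrt t * ρ * M < Real.sqrt t * M := by
    have h1 := hcon i0 0 (by simp [l1norm])
    refine lt_of_lt_of_le h1 ?_
    simp only [Pi.zero_apply, zero_smul, Finset.sum_const_zero, sub_zero, l2norm]
    rw [Real.sqrt_le_iff]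
    refine ⟨by positivity, ?_⟩
    rw [mul_pow, Real.sq_sqrt (by linarith)]
    have h2 : ∑ k, v i0 k ^ 2 = ∑ k ∈ S i0, v i0 k ^ 2 := by
      symm
      refine Finset.sum_subset (Finset.subset_univ _) (fun k _ hk => ?_)
      rw [hS0 i0 k hk]; ring
    rw [h2]
    have h3 : ∑ k ∈ S i0, v i0 k ^ 2 ≤ (S i0).card • M ^ 2 := by
      refine Finset.sum_le_card_nsmul _ _ _ (fun k _ => ?_)
      rw [← sq_abs]
      exact pow_le_pow_left₀ (abs_nonneg _) (hM i0 k) 2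
    refine h3.trans ?_
    rw [nsmul_eq_mul]
    have : ((S i0).card : ℝ) ≤ t := by exact_mod_cast hS i0
    gcongr
  have hMpos : 0 < M := by
    rcases hM0.eq_or_lt with h | h
    · rw [← h] at hlow; simp at hlow
    · exact h
  have hρ1 : ρ < 1 := by
    by_contra h
    push Not at h
    have : 0 < Real.sqrt t * M := by positivity
    nlinarith
  have hn : 0 < n := by
    rcases Nat.eq_zero_or_pos n with h | h
    · exfalso
      subst h
      have : M = 0 := by simp [hMdef]
      linarith
    · exact h
  have hnr : (0:ℝ) < n := by exact_mod_cast hn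
  have hρpos : 0 < ρ := by positivity
  have hρpow : ρ ^ (4 * t) * N = 4 ^ ((t + 2) * (4 * t)) * n := by
    rw [hρ, mul_pow, ← pow_mul, ← Real.rpow_natCast (((n:ℝ) / N) ^ _), ← Real.rpow_mul (by positivity)]
    have : (1:ℝ) / (4 * t) * ((4 * t : ℕ) : ℝ) = 1 := by
      push_cast; field_simp
    rw [this, Real.rpow_one]
    field_simp
  -- dual certificates
  choose u c hc hu huv hui using fun i => aux_dual v i (3 ^ t) (Real.sqrt t * ρ * M) (by positivity)
    (by positivity) (hcon i)
  set τ : ℝ := ρ / (2 ^ t * Real.sqrt t) with hτ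
  have hτpos : 0 < τ := by positivity
  have hτE : Real.sqrt t * ρ * M = 2 ^ t * (t * τ * M) := by
    rw [hτ]
    have : (t:ℝ) = Real.sqrt t * Real.sqrt t := (Real.mul_self_sqrt (by linarith)).symm
    field_simp
    rw [Real.sq_sqrt (by linarith)]
  have hτ2 : 1 / τ ^ 2 = 4 ^ t * t / ρ ^ 2 := by
    rw [hτ, div_pow, mul_pow ((2:ℝ) ^ t) (Real.sqrt t), Real.sq_sqrt (by linarith), ← pow_mul 2 t 2,
      mul_comm t 2, pow_mul 2 2 t, one_div_div]
    norm_num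
  let L : Fin N → Finset (Fin n) := fun i => Finset.univ.filter (fun k => τ < |u i k|)
  set l : ℕ := ⌊1 / τ ^ 2⌋₊ with hl
  have hLl : ∀ i, (L i).card ≤ l := by
    intro i
    refine Nat.le_floor ?_
    rw [le_div_iff₀ (by positivity)]
    calc ((L i).card : ℝ) * τ ^ 2 = (L i).card • τ ^ 2 := by rw [nsmul_eq_mul]
      _ ≤ ∑ k ∈ L i, u i k ^ 2 := by
        refine Finset.card_nsmul_le_sum _ _ _ (fun k hk => ?_)
        rw [← sq_abs (u i k)]
        exact pow_le_pow_left₀ hτpos.le (Finset.mem_filter.mp hk).2.le 2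
      _ ≤ ∑ k, u i k ^ 2 :=
        Finset.sum_le_sum_of_subset_of_nonneg (Finset.subset_univ _) (fun k _ _ => sq_nonneg _)
      _ ≤ 1 := hu i
  have hl1 : 1 ≤ l := by
    refine Nat.le_floor ?_
    rw [hτ2, le_div_iff₀ (by positivity)]
    have h1 : (1:ℝ) ≤ 4 ^ t := one_le_pow₀ (by norm_num)
    have h2 : ρ ^ 2 ≤ 1 := pow_le_one₀ hρ0 hρ1.le
    push_cast
    nlinarith
  have hlle : (l:ℝ) ≤ 1 / τ ^ 2 := Nat.floor_le (by positivity)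
  set m : ℕ := 2 * l with hm
  have hmpos : 0 < m := by omega
  obtain ⟨h, J, -, hJc, hJp⟩ := aux_rand (Finset.univ : Finset (Fin N)) m t l hmpos
    ({⟨0, hmpos⟩} : Finset (Fin m)) (by simp [hm]) S (fun i => L i \ S i) (fun _ _ => ⟨0, hmpos⟩)
    (fun i _ => hS i) (fun i _ => (Finset.card_le_card Finset.sdiff_subset).trans (hLl i))
    (fun i _ => Finset.disjoint_sdiff)
  let u' : Fin N → Fin n → ℝ := fun i k => if k ∈ L i then u i k else 0
  have hdiff : ∀ i j, |∑ k, u' i k * v j k - ∑ k, u i k * v j k| ≤ t * τ * M := by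
    intro i j
    rw [← Finset.sum_sub_distrib]
    have e : ∑ k, (u' i k * v j k - u i k * v j k) = ∑ k ∈ S j, (u' i k * v j k - u i k * v j k) := by
      symm
      refine Finset.sum_subset (Finset.subset_univ _) (fun k _ hk => ?_)
      rw [hS0 j k hk]; ring
    rw [e]
    refine (Finset.abs_sum_le_sum_abs _ _).trans ?_
    have h1 : ∑ k ∈ S j, |u' i k * v j k - u i k * v j k| ≤ (S j).card • (τ * M) := by
      refine Finset.sum_le_card_nsmul _ _ _ (fun k _ => ?_)
      rw [← sub_mul, abs_mul]
      refine mul_le_mul ?_ (hM j k) (abs_nonneg _) hτpos.le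
      by_cases hk : k ∈ L i
      · simp [u', hk, hτpos.le]
      · simp only [u', hk, if_false, zero_sub, abs_neg]
        by_contra h'
        exact hk (by simp only [L, Finset.mem_filter, Finset.mem_univ, true_and]; exact not_le.mp h')
    refine h1.trans ?_
    rw [nsmul_eq_mul, mul_assoc]
    have : ((S j).card : ℝ) ≤ t := by exact_mod_cast hS j
    gcongr
  have hsum : ∀ i ∈ J, ∀ j ∈ J, ∑ k ∈ S i ∩ S j, u' i k * v j k = ∑ k, u' i k * v j k := by
    intro i hi j hj
    refine Finset.sum_subset (Finset.subset_univ _) (fun k _ hk => ?_)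
    by_cases hkj : k ∈ S j
    · have hki : k ∉ S i := fun h' => hk (Finset.mem_inter.mpr ⟨h', hkj⟩)
      have hkL : k ∉ L i := by
        intro h'
        refine (hJp i hi).2 k (Finset.mem_sdiff.mpr ⟨h', hki⟩) ?_
        rw [(hJp j hj).1 k hkj]
        simp
      simp [u', hkL]
    · rw [hS0 j k hkj, mul_zero]
  have hinst : AuxInst t t J u' v S (id : Fin n → Fin n) (fun i => c i + t * τ * M) := by
    refine ⟨fun i _ => hS i, ?_, ?_, ?_, ?_, ?_⟩
    · intro i _ a ha a' haa
      simp only [id] at haa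
      rwa [haa]
    · intro i _
      rw [Finset.image_id]; exact hS i
    · intro i _
      have := hc i
      positivity
    · intro i hi j hj hne
      rw [hsum i hi j hj]
      have h1 := hdiff i j
      have h2 := huv i j hne
      rw [abs_le] at *
      constructor <;> linarith
    · intro i hi
      have h0 := hsum i hi i hi
      rw [Finset.inter_self] at h0
      rw [h0]
      have h1 := (abs_le.mp (hdiff i i)).1
      have h2 := hui i
      rw [hτE] at h2
      have h3 : (2:ℝ) ^ (S i).card ≤ 2 ^ t := pow_le_pow_right₀ (by norm_num) (hS i)
      have h4 : (2:ℝ) ^ t ≤ 3 ^ t := by gcongr; norm_num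
      have h5 := hc i
      have h6 : 0 ≤ t * τ * M := by positivity
      have h7 : ((2:ℝ) ^ (S i).card - 1) * (c i + t * τ * M) ≤ (2 ^ t - 1) * (c i + t * τ * M) := by
        gcongr
      have h8 : (2:ℝ) ^ t * c i ≤ 3 ^ t * c i := by gcongr
      linarith
  have hmain := aux_main t ht t J u' v S id _ hinst
  simp only [Finset.card_univ, Fintype.card_fin] at hJc hmain
  have hmle : (m:ℝ) ≤ 2 * (4 ^ t * t / ρ ^ 2) := by
    rw [← hτ2, hm]; push_cast; linarith
  have hNle : (N:ℝ) ≤ 2 * (2 * (4 ^ t * t / ρ ^ 2)) ^ t * ((8 * (t:ℝ) ^ 4) ^ (2 * t) * n) := by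
    refine hJc.trans ?_
    gcongr
  have harith := aux_arith t ht
  have hfin : ρ ^ (4 * t) * N ≤ (2 * (128 * 4 ^ t * (t:ℝ) ^ 9) ^ t) * n := by
    calc ρ ^ (4 * t) * N ≤ ρ ^ (4 * t) * (2 * (2 * (4 ^ t * t / ρ ^ 2)) ^ t * ((8 * (t:ℝ) ^ 4) ^ (2 * t) * n)) := by
          gcongr
      _ = (2 * (ρ ^ 2 * (128 * 4 ^ t * (t:ℝ) ^ 9)) ^ t) * n := by
          rw [pow_mul ρ, pow_mul (8 * (t:ℝ) ^ 4)]
          rw [show ∀ a b c d : ℝ, a ^ t * (2 * b ^ t * (c ^ t * d)) = 2 * (a * b * c) ^ t * d by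
            intro a b c d; rw [mul_pow, mul_pow]; ring]
          congr 3
          field_simp
          ring
      _ ≤ (2 * (1 * (128 * 4 ^ t * (t:ℝ) ^ 9)) ^ t) * n := by
          have h2 : ρ ^ 2 ≤ 1 := pow_le_one₀ hρ0 hρ1.le
          gcongr
      _ = _ := by rw [one_mul]
  rw [hρpow] at hfin
  have := (mul_lt_mul_of_pos_right harith hnr)
  linarith
end
end

section
/- Let n, m ∈ ℕ with m ≥ 1, let Σ be an n×n positive semidefinite real matrix, let w* ∈ ℝⁿ, let W ⊆ ℝⁿ, let 𝕏 be a real m×n matrix, let ξ ∈ ℝᵐ, and set y := 𝕏w* + ξ. Let ε ∈ (0, 1/2], σ ≥ 0, and n_eff ≥ 0. Assume that for all w ∈ W: (1) |(1/m)·‖𝕏(w−w*)‖₂² − ‖w−w*‖_Σ²| ≤ ε·‖w−w*‖_Σ², and (2) |⟨ξ, 𝕏(w−w*)⟩| ≤ σ·√(n_eff)·‖𝕏(w−w*)‖₂. Let ŵ ∈ W satisfy ‖𝕏ŵ − y‖₂² ≤ ‖𝕏w − y‖₂² for all w ∈ W. Then for every w₀ ∈ W, ‖ŵ − w*‖_Σ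 ≤ √((1+ε)/(1−ε))·‖w₀ − w*‖_Σ + 2σ·√(2·n_eff/m). -/
open Matrix MeasureTheory ProbabilityTheory
open scoped BigOperators ENNReal

noncomputable section

/-- deterministic model-selection bound for the empirical risk minimizer. -/
theorem stmt14 (n m : ℕ) (hm : 1 ≤ m) (A : Matrix (Fin n) (Fin n) ℝ) (hA : A.PosSemidef)
    (wstar : Fin n → ℝ) (W : Set (Fin n → ℝ)) (X : Matrix (Fin m) (Fin n) ℝ) (ξ : Fin m → ℝ)
    (ε σ neff : ℝ) (hε0 : 0 < ε) (hε1 : ε ≤ 1 / 2) (hσ : 0 ≤ σ) (hneff : 0 ≤ neff)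
    (y : Fin m → ℝ) (hy : y = X *ᵥ wstar + ξ)
    (h1 : ∀ w ∈ W, |(1 / (m : ℝ)) * l2norm (X *ᵥ (w - wstar)) ^ 2
        - normSigma A (w - wstar) ^ 2| ≤ ε * normSigma A (w - wstar) ^ 2)
    (h2 : ∀ w ∈ W, |ξ ⬝ᵥ (X *ᵥ (w - wstar))| ≤ σ * Real.sqrt neff * l2norm (X *ᵥ (w - wstar)))
    (what : Fin n → ℝ) (hwhat : what ∈ W)
    (hmin : ∀ w ∈ W, l2norm (X *ᵥ what - y) ^ 2 ≤ l2norm (X *ᵥ w - y) ^ 2) :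
    ∀ w₀ ∈ W, normSigma A (what - wstar) ≤
      Real.sqrt ((1 + ε) / (1 - ε)) * normSigma A (w₀ - wstar)
        + 2 * σ * Real.sqrt (2 * neff / m) := by
  intro w₀ hw₀
  have hl : ∀ v : Fin m → ℝ, l2norm v ^ 2 = ∑ i, v i ^ 2 := fun v =>
    Real.sq_sqrt (Finset.sum_nonneg fun i _ => sq_nonneg _)
  have hexp : ∀ w : Fin n → ℝ, l2norm (X *ᵥ w - y) ^ 2 =
      l2norm (X *ᵥ (w - wstar)) ^ 2 - 2 * (ξ ⬝ᵥ (X *ᵥ (w - wstar))) + ∑ i, ξ i ^ 2 := by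
    intro w
    rw [hl, hl, hy, Matrix.mulVec_sub]
    simp only [dotProduct, Finset.mul_sum]
    rw [← Finset.sum_sub_distrib, ← Finset.sum_add_distrib]
    refine Finset.sum_congr rfl fun i _ => ?_
    simp only [Pi.sub_apply, Pi.add_apply]
    ring
  have hmn := hmin w₀ hw₀
  rw [hexp, hexp] at hmn
  have ha1 := h1 what hwhat
  have hb1 := h1 w₀ hw₀
  have ha2 := h2 what hwhat
  have hb2 := h2 w₀ hw₀
  have hN : 0 ≤ normSigma A (what - wstar) := Real.sqrt_nonneg _
  have hN0 : 0 ≤ normSigma A (w₀ - wstar) := Real.sqrt_nonneg _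
  have ha : 0 ≤ l2norm (X *ᵥ (what - wstar)) := Real.sqrt_nonneg _
  have hb : 0 ≤ l2norm (X *ᵥ (w₀ - wstar)) := Real.sqrt_nonneg _
  generalize normSigma A (what - wstar) = N at *
  generalize normSigma A (w₀ - wstar) = N0 at *
  generalize l2norm (X *ᵥ (what - wstar)) = a at *
  generalize l2norm (X *ᵥ (w₀ - wstar)) = b at *
  generalize ξ ⬝ᵥ (X *ᵥ (what - wstar)) = p at *
  generalize ξ ⬝ᵥ (X *ᵥ (w₀ - wstar)) = q at *
  have hs : 0 ≤ σ * Real.sqrt neff := mul_nonneg hσ (Real.sqrt_nonneg _)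
  have hm0 : (0 : ℝ) < m := by exact_mod_cast hm
  have he : 0 < 1 - ε := by linarith
  rw [abs_le] at ha1 hb1 ha2 hb2
  have hab : a ≤ b + 2 * (σ * Real.sqrt neff) := by
    by_contra! hlt
    nlinarith
  have hc : 0 < Real.sqrt (m * (1 - ε)) := Real.sqrt_pos.mpr (mul_pos hm0 he)
  have hA1 : Real.sqrt (m * (1 - ε)) * N ≤ a := by
    apply abs_le_of_sq_le_sq' _ ha |>.2
    rw [mul_pow, Real.sq_sqrt (mul_pos hm0 he).le]
    have h : (1 - ε) * N ^ 2 ≤ 1 / (m : ℝ) * a ^ 2 := by linarith [ha1.1]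
    have := mul_le_mul_of_nonneg_left h hm0.le
    have e : (m : ℝ) * (1 / (m : ℝ) * a ^ 2) = a ^ 2 := by field_simp
    linarith
  have hB1 : b ≤ Real.sqrt (m * (1 - ε)) * (Real.sqrt ((1 + ε) / (1 - ε)) * N0) := by
    apply abs_le_of_sq_le_sq' _ (by positivity) |>.2
    rw [mul_pow, mul_pow, Real.sq_sqrt (mul_pos hm0 he).le, Real.sq_sqrt (by positivity)]
    have h : 1 / (m : ℝ) * b ^ 2 ≤ (1 + ε) * N0 ^ 2 := by linarith [hb1.2]
    have := mul_le_mul_of_nonneg_left h hm0.le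
    have e : (m : ℝ) * (1 / (m : ℝ) * b ^ 2) = b ^ 2 := by field_simp
    have e2 : (m : ℝ) * (1 - ε) * ((1 + ε) / (1 - ε) * N0 ^ 2) = m * ((1 + ε) * N0 ^ 2) := by
      field_simp
    linarith
  have hS : Real.sqrt neff ≤ Real.sqrt (m * (1 - ε)) * Real.sqrt (2 * neff / m) := by
    rw [← Real.sqrt_mul (mul_pos hm0 he).le]
    apply Real.sqrt_le_sqrt
    have e : (m : ℝ) * (1 - ε) * (2 * neff / m) = (1 - ε) * 2 * neff := by field_simp
    rw [e]
    nlinarith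
  have hS2 := mul_le_mul_of_nonneg_left hS hσ
  refine le_of_mul_le_mul_left ?_ hc
  linarith
end
end

section
/- Let n, t ∈ ℕ with t ≥ 1, let L ≥ 1, and let Σ be an n×n positive semidefinite real matrix with Σᵢᵢ ≤ 1 for all i ∈ [n]. Let φ > 0 satisfy φ² ≤ φ²(Σ, t), where φ²(Σ, t) is the t-restricted ℓ1-eigenvalue of Σ with parameter L. Then the standard basis {e₁,…,eₙ} is a (t, φ/√t)-dictionary for Σ; in particular 𝒩_{t, φ/√t}(Σ) ≤ n. -/
open Matrix MeasureTheory ProbabilityTheory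
open scoped BigOperators ENNReal

noncomputable section

/-- `D` is a `(t,α)`-dictionary for `A`: every `t`-sparse `v` with ‖v‖_Σ > 0 correlates
with some element of `D` at level `α` under the Σ-inner product. -/
def IsDictionary {k : ℕ} (t : ℕ) (α : ℝ) (A : Matrix (Fin k) (Fin k) ℝ) {N : ℕ}
    (D : Fin N → Fin k → ℝ) : Prop :=
  ∀ v : Fin k → ℝ, SparseVec t v → 0 < normSigma A v →
    ∃ i, 0 < normSigma A (D i) ∧ α * (normSigma A v * normSigma A (D i)) ≤ |innerSigma A v (D i)|

/-- 𝒩_{t,α}(Σ): the minimum size of a `(t,α)`-dictionary (as an element of ℕ ∪ {∞}). -/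
def coveringNumber {k : ℕ} (t : ℕ) (α : ℝ) (A : Matrix (Fin k) (Fin k) ℝ) : ℝ≥0∞ :=
  sInf {c : ℝ≥0∞ | ∃ (N : ℕ) (D : Fin N → Fin k → ℝ), IsDictionary t α A D ∧ c = (N : ℝ≥0∞)}

/-- restriction of `w` to coordinates in `S` (zero outside `S`). -/
def restrictTo {k : ℕ} (S : Finset (Fin k)) (w : Fin k → ℝ) : Fin k → ℝ :=
  fun i => if i ∈ S then w i else 0

/-- The S-restricted ℓ1-eigenvalue φ²(Σ,S) with cone parameter L. -/
def restrictedL1Eig {k : ℕ} (A : Matrix (Fin k) (Fin k) ℝ) (L : ℝ) (S : Finset (Fin k)) : ℝ :=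
  sInf {r : ℝ | ∃ w : Fin k → ℝ, w ≠ 0 ∧
    l1norm (fun i => if i ∈ S then 0 else w i) ≤ L * l1norm (restrictTo S w) ∧
    r = (S.card : ℝ) * innerSigma A w w / l1norm (restrictTo S w) ^ 2}

/-- The t-restricted ℓ1-eigenvalue φ²(Σ,t): minimum of φ²(Σ,S) over nonempty S, |S| ≤ t. -/
def restrictedL1EigT {k : ℕ} (A : Matrix (Fin k) (Fin k) ℝ) (L : ℝ) (t : ℕ) : ℝ :=
  sInf {r : ℝ | ∃ S : Finset (Fin k), S.Nonempty ∧ S.card ≤ t ∧ r = restrictedL1Eig A L S}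

lemma innerSigma_self_nonneg {k : ℕ} {A : Matrix (Fin k) (Fin k) ℝ} (hA : A.PosSemidef)
    (w : Fin k → ℝ) : 0 ≤ innerSigma A w w := by
  have h := hA.dotProduct_mulVec_nonneg w
  simpa [innerSigma] using h

lemma restrictedL1Eig_elem_nonneg {k : ℕ} {A : Matrix (Fin k) (Fin k) ℝ} (hA : A.PosSemidef)
    (L : ℝ) (S : Finset (Fin k)) :
    ∀ r ∈ {r : ℝ | ∃ w : Fin k → ℝ, w ≠ 0 ∧
    l1norm (fun i => if i ∈ S then 0 else w i) ≤ L * l1norm (restrictTo S w) ∧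
    r = (S.card : ℝ) * innerSigma A w w / l1norm (restrictTo S w) ^ 2}, 0 ≤ r := by
  rintro r ⟨w, -, -, rfl⟩
  have := innerSigma_self_nonneg hA w
  positivity

/-- compatibility bound applied to a sparse vector -/
lemma compat_bound {n t : ℕ} {L : ℝ} (hL : 1 ≤ L)
    {A : Matrix (Fin n) (Fin n) ℝ} (hA : A.PosSemidef)
    {φ : ℝ} (hcompat : φ ^ 2 ≤ restrictedL1EigT A L t)
    {v : Fin n → ℝ} (hv : SparseVec t v) (hv0 : v ≠ 0) :
    φ ^ 2 * l1norm v ^ 2 ≤ t * innerSigma A v v := by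
  classical
  set S : Finset (Fin n) := Finset.univ.filter (fun i => v i ≠ 0) with hS
  have hcard : S.card ≤ t := by
    have h : {i | v i ≠ 0}.ncard ≤ t := hv
    rw [Set.ncard_eq_toFinset_card'] at h
    simpa [hS] using h
  obtain ⟨j, hj⟩ : ∃ j, v j ≠ 0 := Function.ne_iff.mp hv0
  have hne : S.Nonempty := ⟨j, by simp [hS, hj]⟩
  have hr : restrictTo S v = v := by
    funext i
    by_cases h : v i = 0 <;> simp [restrictTo, hS, h]
  have hc : (fun i => if i ∈ S then 0 else v i) = (0 : Fin n → ℝ) := by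
    funext i
    by_cases h : v i = 0 <;> simp [hS, h]
  have hpos : 0 < l1norm v :=
    Finset.sum_pos' (fun i _ => abs_nonneg _) ⟨j, Finset.mem_univ _, abs_pos.mpr hj⟩
  have h1 : restrictedL1EigT A L t ≤ restrictedL1Eig A L S := by
    refine csInf_le ⟨0, ?_⟩ ⟨S, hne, hcard, rfl⟩
    rintro r ⟨T, -, -, rfl⟩
    exact Real.sInf_nonneg (restrictedL1Eig_elem_nonneg hA L T)
  have h2 : restrictedL1Eig A L S ≤ (S.card : ℝ) * innerSigma A v v / l1norm v ^ 2 := by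
    refine csInf_le ⟨0, restrictedL1Eig_elem_nonneg hA L S⟩ ⟨v, hv0, ?_, by rw [hr]⟩
    rw [hc, hr]
    have : l1norm (0 : Fin n → ℝ) = 0 := by simp [l1norm]
    rw [this]
    positivity
  have h3 := hcompat.trans (h1.trans h2)
  rw [le_div_iff₀ (by positivity)] at h3
  refine h3.trans ?_
  have := innerSigma_self_nonneg hA v
  gcongr

/-- under the compatibility condition, the standard basis is a
(t, φ/√t)-dictionary for Σ; in particular 𝒩_{t,φ/√t}(Σ) ≤ n. -/
theorem stmt17 (n t : ℕ) (ht : 1 ≤ t) (L : ℝ) (hL : 1 ≤ L)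
    (A : Matrix (Fin n) (Fin n) ℝ) (hA : A.PosSemidef) (hdiag : ∀ i, A i i ≤ 1)
    (φ : ℝ) (hφ : 0 < φ) (hcompat : φ ^ 2 ≤ restrictedL1EigT A L t) :
    IsDictionary t (φ / Real.sqrt t) A (fun i : Fin n => (Pi.single i 1 : Fin n → ℝ)) ∧
      coveringNumber t (φ / Real.sqrt t) A ≤ (n : ℝ≥0∞) := by
  have hdict : IsDictionary t (φ / Real.sqrt t) A
      (fun i : Fin n => (Pi.single i 1 : Fin n → ℝ)) := by
    intro v hv hvpos
    have hq : 0 < innerSigma A v v := Real.sqrt_pos.mp hvpos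
    have hv0 : v ≠ 0 := by
      rintro rfl
      simp [innerSigma] at hq
    have hb := compat_bound hL hA hcompat hv hv0
    obtain ⟨j, hj⟩ : ∃ j, v j ≠ 0 := Function.ne_iff.mp hv0
    have hpos : 0 < l1norm v :=
      Finset.sum_pos' (fun i _ => abs_nonneg _) ⟨j, Finset.mem_univ _, abs_pos.mpr hj⟩
    obtain ⟨i, -, hi⟩ := Finset.exists_max_image Finset.univ (fun i => |(A *ᵥ v) i|)
      ⟨j, Finset.mem_univ _⟩
    have hqle : innerSigma A v v ≤ l1norm v * |(A *ᵥ v) i| := by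
      unfold innerSigma l1norm dotProduct
      rw [Finset.sum_mul]
      refine Finset.sum_le_sum fun k hk => ?_
      refine (le_abs_self _).trans ?_
      rw [abs_mul]
      exact mul_le_mul_of_nonneg_left (hi k hk) (abs_nonneg _)
    have hT : Aᵀ = A := by simpa using hA.isHermitian.eq
    have hin : innerSigma A v (Pi.single i 1) = (A *ᵥ v) i := by
      unfold innerSigma
      rw [Matrix.dotProduct_mulVec, ← Matrix.mulVec_transpose, hT]
      simp
    have hee : innerSigma A (Pi.single i 1) (Pi.single i 1) = A i i := by
      simp [innerSigma]
    have hMpos : 0 < |(A *ᵥ v) i| := by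
      by_contra h
      have h0 : |(A *ᵥ v) i| = 0 := le_antisymm (not_lt.mp h) (abs_nonneg _)
      rw [h0] at hqle
      linarith
    have hAii : 0 < A i i := by
      have h0 : 0 ≤ A i i := hee ▸ innerSigma_self_nonneg hA _
      refine lt_of_le_of_ne h0 fun h => ?_
      have hz := (hA.dotProduct_mulVec_zero_iff (Pi.single i 1)).mp
        (by simpa [innerSigma, ← h] using hee)
      have : innerSigma A v (Pi.single i 1) = 0 := by
        unfold innerSigma
        rw [hz]
        simp
      rw [hin] at this
      simp [this] at hMpos
    refine ⟨i, ?_, ?_⟩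
    · unfold normSigma
      rw [hee]
      exact Real.sqrt_pos.mpr hAii
    · rw [hin]
      have hle1 : normSigma A (Pi.single i 1) ≤ 1 := by
        unfold normSigma
        rw [hee]
        exact Real.sqrt_le_one.mpr (hdiag i)
      have ht0 : 0 < Real.sqrt t := Real.sqrt_pos.mpr (by exact_mod_cast ht)
      have hb' : φ * l1norm v ≤ Real.sqrt t * normSigma A v := by
        refine (pow_le_pow_iff_left₀ (by positivity) (by positivity) two_ne_zero).mp ?_
        unfold normSigma
        rw [mul_pow, mul_pow, Real.sq_sqrt (by positivity), Real.sq_sqrt hq.le]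
        exact hb
      have hnsq : normSigma A v * normSigma A v = innerSigma A v v :=
        Real.mul_self_sqrt hq.le
      have hkey : φ / Real.sqrt t * normSigma A v ≤ |(A *ᵥ v) i| := by
        rw [div_mul_eq_mul_div, div_le_iff₀ ht0]
        refine le_of_mul_le_mul_right ?_ hvpos
        calc φ * normSigma A v * normSigma A v = φ * innerSigma A v v := by
              rw [mul_assoc, hnsq]
          _ ≤ φ * (l1norm v * |(A *ᵥ v) i|) := by gcongr
          _ = (φ * l1norm v) * |(A *ᵥ v) i| := by ring
          _ ≤ (Real.sqrt t * normSigma A v) * |(A *ᵥ v) i| := by gcongr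
          _ = _ := by ring
      calc φ / Real.sqrt t * (normSigma A v * normSigma A (Pi.single i 1))
          ≤ φ / Real.sqrt t * (normSigma A v * 1) := by gcongr
        _ ≤ _ := by simpa using hkey
  exact ⟨hdict, sInf_le ⟨n, _, hdict, rfl⟩⟩
end
end

section
/- There exists a universal constant C > 0 such that the following holds. Let n, m, t ∈ ℕ with n ≥ 2 and t ≥ 2, and let p₁,…,pₙ ∈ ℝᵐ be unit vectors (‖pᵢ‖₂ = 1 for all i). Then there exists a finite set 𝒟 ⊆ ℝⁿ with |𝒟| ≤ C·n^{t−1/2}, all of whose elements are t-sparse, such that for every t-sparse x ∈ ℝⁿ there exist coefficients (α_d)_{d∈𝒟} ∈ ℝ^𝒟 with x = Σ_{d∈𝒟} α_d·d and Σ_{d∈𝒟} |α_d|·‖Σᵢ₌₁ⁿ dᵢpᵢ‖₂ ≤ C·t^{3/2}·log(n)·‖Σᵢ₌₁ⁿ xᵢpᵢ‖₂. -/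
open Matrix MeasureTheory ProbabilityTheory
open scoped BigOperators ENNReal

noncomputable section

open Finset in
/-- A rectangle-free subset of the grid is small. -/
lemma rect_free_count (n : ℕ) (E : Finset (Fin n × Fin n))
    (hE : ∀ i l j k, (i, j) ∈ E → (i, k) ∈ E → (l, j) ∈ E → (l, k) ∈ E → i = l ∨ j = k) :
    (E.card : ℝ) ^ 2 ≤ n * (E.card + (n : ℝ) ^ 2) := by
  classical
  let d : Fin n → ℕ := fun i => (E.filter (fun e => e.1 = i)).card
  let Q := (E ×ˢ E).filter (fun q => q.1.1 = q.2.1)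
  have h1 : E.card = ∑ i, d i :=
    Finset.card_eq_sum_card_fiberwise (s := E) (f := fun e => e.1) (t := Finset.univ) (by intro x _; simp)
  have h2 : Q.card = ∑ i, d i ^ 2 := by
    rw [Finset.card_eq_sum_card_fiberwise (f := fun q => q.1.1) (t := Finset.univ)
      (by intro x _; simp)]
    refine Finset.sum_congr rfl fun i _ => ?_
    rw [sq, ← Finset.card_product]
    congr 1
    ext ⟨a, b⟩
    simp only [Q, Finset.mem_filter, Finset.mem_product]
    constructor
    · rintro ⟨⟨⟨ha, hb⟩, h⟩, h'⟩
      exact ⟨⟨ha, h'⟩, hb, by rw [← h, h']⟩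
    · rintro ⟨⟨ha, h⟩, hb, h'⟩
      exact ⟨⟨⟨ha, hb⟩, by rw [h, h']⟩, h⟩
  have h3 : Q.card ≤ E.card + n ^ 2 := by
    rw [← Finset.card_filter_add_card_filter_not (s := Q) (fun q => q.1.2 = q.2.2)]
    refine Nat.add_le_add ?_ ?_
    · refine Finset.card_le_card_of_injOn (fun q => q.1) ?_ ?_
      · intro q hq
        simp only [Q, Finset.coe_filter, Finset.mem_filter, Finset.mem_product, Set.mem_ofPred_eq] at hq
        exact hq.1.1.1
      · rintro ⟨⟨a, b⟩, ⟨c, e⟩⟩ hq ⟨⟨a', b'⟩, ⟨c', e'⟩⟩ hq' h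
        simp only [Q, Finset.coe_filter, Finset.mem_filter, Finset.mem_product, Set.mem_ofPred_eq] at hq hq'
        simp only [Prod.mk.injEq] at h ⊢
        grind
    · have : (Finset.univ : Finset (Fin n × Fin n)).card = n ^ 2 := by simp [sq]
      rw [← this]
      refine Finset.card_le_card_of_injOn (fun q => (q.1.2, q.2.2)) ?_ ?_
      · intro q _; simp
      · rintro ⟨⟨a, b⟩, ⟨c, e⟩⟩ hq ⟨⟨a', b'⟩, ⟨c', e'⟩⟩ hq' h
        simp only [Q, Finset.coe_filter, Finset.mem_filter, Finset.mem_product, Set.mem_ofPred_eq] at hq hq'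
        simp only [Prod.mk.injEq] at h ⊢
        obtain ⟨⟨⟨ha, hb⟩, h1⟩, h2⟩ := hq
        obtain ⟨⟨⟨ha', hb'⟩, h1'⟩, h2'⟩ := hq'
        obtain ⟨h3, h4⟩ := h
        subst h1 h1' h3 h4
        rcases hE a a' b e ha hb ha' hb' with h | h
        · simp [h]
        · exact absurd h h2
  have h4 : (∑ i, (d i : ℝ)) ^ 2 ≤ n * ∑ i, (d i : ℝ) ^ 2 := by
    have := sq_sum_le_card_mul_sum_sq (s := (Finset.univ : Finset (Fin n))) (f := fun i => (d i : ℝ))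
    simpa using this
  have h5 : ((Q.card : ℕ) : ℝ) ≤ E.card + (n : ℝ) ^ 2 := by exact_mod_cast h3
  have h6 : (E.card : ℝ) = ∑ i, (d i : ℝ) := by rw [h1]; push_cast; rfl
  have h7 : (Q.card : ℝ) = ∑ i, (d i : ℝ) ^ 2 := by rw [h2]; push_cast; rfl
  rw [← h6, ← h7] at h4
  exact h4.trans (by gcongr)

lemma rect_free_count' (n : ℕ) (hn : 1 ≤ n) (E : Finset (Fin n × Fin n))
    (hE : ∀ i l j k, (i, j) ∈ E → (i, k) ∈ E → (l, j) ∈ E → (l, k) ∈ E → i = l ∨ j = k) :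
    (E.card : ℝ) ≤ 2 * (n * Real.sqrt n) := by
  have h := rect_free_count n E hE
  have hn' : (1 : ℝ) ≤ n := by exact_mod_cast hn
  set s := Real.sqrt n with hs
  have hs2 : s ^ 2 = n := Real.sq_sqrt (by positivity)
  have hs1 : 1 ≤ s := by rw [hs]; exact Real.one_le_sqrt.mpr hn'
  rw [← hs2] at h ⊢
  by_contra hc
  push Not at hc
  set e : ℝ := (E.card : ℝ)
  have a1 : s ^ 2 * 2 ≤ e := by nlinarith [mul_nonneg (sq_nonneg s) (sub_nonneg.2 hs1)]
  have a2 : (2 * (s ^ 2 * s)) ^ 2 < e ^ 2 := by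
    apply pow_lt_pow_left₀ hc (by positivity) (by norm_num)
  have e0 : 0 ≤ e := by simp [e]
  nlinarith [mul_le_mul_of_nonneg_right a1 e0]

open Finset in
/-- Greedy bipartite 3-spanner. -/
lemma spanner (n : ℕ) (w : Fin n × Fin n → ℝ) (s : Finset (Fin n × Fin n)) :
    ∃ E ⊆ s, (∀ e ∈ s, ∃ k l, (e.1, k) ∈ E ∧ (l, k) ∈ E ∧ (l, e.2) ∈ E ∧
        w (e.1, k) ≤ w e ∧ w (l, k) ≤ w e ∧ w (l, e.2) ≤ w e) ∧
      (∀ i l j k, (i, j) ∈ E → (i, k) ∈ E → (l, j) ∈ E → (l, k) ∈ E → i = l ∨ j = k) := by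
  classical
  induction s using Finset.induction_on_max_value w with
  | empty => exact ⟨∅, by simp, by simp, by simp⟩
  | insert a s has hmax ih =>
    obtain ⟨E, hEs, hc, hf⟩ := ih
    by_cases hex : ∃ k l, (a.1, k) ∈ E ∧ (l, k) ∈ E ∧ (l, a.2) ∈ E
    · obtain ⟨k, l, h1, h2, h3⟩ := hex
      refine ⟨E, hEs.trans (Finset.subset_insert _ _), ?_, hf⟩
      intro e he
      rcases Finset.mem_insert.1 he with rfl | he
      · exact ⟨k, l, h1, h2, h3, hmax _ (hEs h1), hmax _ (hEs h2), hmax _ (hEs h3)⟩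
      · exact hc e he
    · refine ⟨insert a E, Finset.insert_subset_insert _ hEs, ?_, ?_⟩
      · intro e he
        rcases Finset.mem_insert.1 he with rfl | he
        · exact ⟨e.2, e.1, by simp⟩
        · obtain ⟨k, l, h1, h2, h3, h⟩ := hc e he
          exact ⟨k, l, Finset.mem_insert_of_mem h1, Finset.mem_insert_of_mem h2,
            Finset.mem_insert_of_mem h3, h⟩
      · intro i l j k h1 h2 h3 h4
        by_contra hne
        push Not at hne
        obtain ⟨hil, hjk⟩ := hne
        obtain ⟨a1, a2⟩ := a
        simp only [Finset.mem_insert, Prod.mk.injEq] at h1 h2 h3 h4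
        simp only at hex
        push Not at hex
        have := hf i l j k
        have e1 := hex k l
        have e2 := hex j l
        have e3 := hex k i
        have e4 := hex j i
        grind

section rep

variable {n : ℕ} {F : Type*} [NormedAddCommGroup F] [InnerProductSpace ℝ F]

/-- `x` is representable over `D` with cost at most `c`. -/
def SRep (P : (Fin n → ℝ) →ₗ[ℝ] F) (D : Finset (Fin n → ℝ)) (x : Fin n → ℝ) (c : ℝ) : Prop :=
  ∃ a : (Fin n → ℝ) → ℝ, x = ∑ d ∈ D, a d • d ∧ ∑ d ∈ D, |a d| * ‖P d‖ ≤ c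

variable {P : (Fin n → ℝ) →ₗ[ℝ] F} {D D' : Finset (Fin n → ℝ)} {x y : Fin n → ℝ} {c c' : ℝ}

lemma SRep.le (h : SRep P D x c) (hc : c ≤ c') : SRep P D x c' := by
  obtain ⟨a, h1, h2⟩ := h
  exact ⟨a, h1, h2.trans hc⟩

lemma SRep.mono (h : SRep P D x c) (hD : D ⊆ D') : SRep P D' x c := by
  classical
  obtain ⟨a, h1, h2⟩ := h
  refine ⟨fun d => if d ∈ D then a d else 0, ?_, ?_⟩
  · rw [h1, ← Finset.sum_subset hD]
    · exact Finset.sum_congr rfl fun d hd => by simp [hd]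
    · intro d _ hd; simp [hd]
  · rw [← Finset.sum_subset hD]
    · refine le_trans (le_of_eq ?_) h2
      exact Finset.sum_congr rfl fun d hd => by simp [hd]
    · intro d _ hd; simp [hd]

lemma SRep.add (h : SRep P D x c) (h' : SRep P D y c') : SRep P D (x + y) (c + c') := by
  obtain ⟨a, h1, h2⟩ := h
  obtain ⟨b, h3, h4⟩ := h'
  refine ⟨fun d => a d + b d, ?_, ?_⟩
  · simp only [add_smul, Finset.sum_add_distrib]
    rw [← h1, ← h3]
  · refine le_trans ?_ (add_le_add h2 h4)
    rw [← Finset.sum_add_distrib]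
    refine Finset.sum_le_sum fun d _ => ?_
    rw [← add_mul]
    exact mul_le_mul_of_nonneg_right (abs_add_le _ _) (norm_nonneg _)

lemma SRep.smul (h : SRep P D x c) (s : ℝ) : SRep P D (s • x) (|s| * c) := by
  obtain ⟨a, h1, h2⟩ := h
  refine ⟨fun d => s * a d, ?_, ?_⟩
  · simp only [mul_smul, ← Finset.smul_sum]
    rw [← h1]
  · simp only [abs_mul, mul_assoc, ← Finset.mul_sum]
    exact mul_le_mul_of_nonneg_left h2 (abs_nonneg _)

lemma SRep.single (h : x ∈ D) : SRep P D x ‖P x‖ := by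
  classical
  refine ⟨fun d => if d = x then 1 else 0, ?_, ?_⟩
  · simp [ite_smul, h]
  · apply le_of_eq
    rw [Finset.sum_eq_single x]
    · simp
    · intro b _ hb; simp [hb]
    · intro hne; exact absurd h hne

/-- For each `S` and `k`, a vector `u = s (e_k - c)`, with `c` supported on `S`, `P u` orthogonal to
everything supported on `S`, and `‖P u‖ ∈ {0, 1}`. -/
lemma exists_resid (P : (Fin n → ℝ) →ₗ[ℝ] F) (S : Finset (Fin n)) (k : Fin n) :
    ∃ (u c : Fin n → ℝ) (s : ℝ), (∀ i, i ∉ S → c i = 0) ∧ (∀ i, i ∉ S → i ≠ k → u i = 0) ∧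
      Pi.single k (1 : ℝ) = s • u + c ∧
      (P u = 0 ∨ ‖P u‖ = 1) ∧
      (∀ z : Fin n → ℝ, (∀ i, i ∉ S → z i = 0) → inner ℝ (P z) (P u) = 0) := by
  let V : Submodule ℝ (Fin n → ℝ) :=
    { carrier := {z | ∀ i, i ∉ S → z i = 0}
      add_mem' := by intro a b ha hb i hi; simp [ha i hi, hb i hi]
      zero_mem' := by intro i _; rfl
      smul_mem' := by intro r a ha i hi; simp [ha i hi] }
  let W := V.map P
  have : FiniteDimensional ℝ W := inferInstance
  have hmem : W.starProjection (P (Pi.single k 1)) ∈ W := Submodule.starProjection_apply_mem _ _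
  obtain ⟨c, hcV, hc⟩ := hmem
  have hperp : ∀ z ∈ V, inner ℝ (P z) (P (Pi.single k 1 - c)) = 0 := by
    intro z hz
    rw [map_sub, hc, real_inner_comm]
    exact Submodule.starProjection_inner_eq_zero _ _ ⟨z, hz, rfl⟩
  by_cases h0 : P (Pi.single k 1 - c) = 0
  · refine ⟨Pi.single k 1 - c, c, 1, hcV, ?_, by simp, Or.inl h0, hperp⟩
    intro i hi hik
    simp [hcV i hi, hik]
  · have hne : ‖P (Pi.single k 1 - c)‖ ≠ 0 := norm_ne_zero_iff.2 h0
    refine ⟨‖P (Pi.single k 1 - c)‖⁻¹ • (Pi.single k 1 - c), c, ‖P (Pi.single k 1 - c)‖,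
      hcV, ?_, ?_, Or.inr ?_, ?_⟩
    · intro i hi hik
      simp [hcV i hi, hik]
    · rw [smul_smul, mul_inv_cancel₀ hne]; simp
    · rw [map_smul, norm_smul, norm_inv, norm_norm, inv_mul_cancel₀ hne]
    · intro z hz
      rw [map_smul, inner_smul_right, hperp z hz, mul_zero]

lemma norm_le_of_orth {a b : F} (h : inner ℝ a b = 0) : ‖a‖ ≤ ‖a + b‖ ∧ ‖b‖ ≤ ‖a + b‖ := by
  have := norm_add_sq_real a b
  rw [h] at this
  constructor
  · apply le_of_sq_le_sq _ (norm_nonneg _)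
    nlinarith [sq_nonneg ‖b‖]
  · apply le_of_sq_le_sq _ (norm_nonneg _)
    nlinarith [sq_nonneg ‖a‖]

/-- Gram–Schmidt dictionary for the vectors supported on `S`. -/
lemma exists_base (P : (Fin n → ℝ) →ₗ[ℝ] F) (S : Finset (Fin n)) :
    ∃ B : Finset (Fin n → ℝ), B.card ≤ S.card ∧ (∀ d ∈ B, ∀ i, i ∉ S → d i = 0) ∧
      ∀ z : Fin n → ℝ, (∀ i, i ∉ S → z i = 0) → SRep P B z (S.card * ‖P z‖) := by
  classical
  induction S using Finset.induction_on with
  | empty =>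
    refine ⟨∅, by simp, by simp, ?_⟩
    intro z hz
    refine ⟨0, ?_, by simp⟩
    ext i
    simp [hz i (by simp)]
  | insert k S hk ih =>
    obtain ⟨B, hB, hs, hr⟩ := ih
    obtain ⟨u, c, s, hc, hu, he, -, ho⟩ := exists_resid P S k
    refine ⟨insert u B, ?_, ?_, ?_⟩
    · rw [Finset.card_insert_of_notMem hk]
      exact (Finset.card_insert_le _ _).trans (by omega)
    · intro d hd i hi
      simp only [Finset.mem_insert, not_or] at hi
      rcases Finset.mem_insert.1 hd with rfl | hd
      · exact hu i hi.2 hi.1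
      · exact hs d hd i hi.2
    · intro z hz
      set z' : Fin n → ℝ := (z - z k • Pi.single k 1) + z k • c with hz'
      have hzz : z = z' + (z k * s) • u := by
        rw [hz', he]
        simp only [smul_add, mul_smul]
        abel
      have hz's : ∀ i, i ∉ S → z' i = 0 := by
        intro i hi
        by_cases hik : i = k
        · subst hik
          simp [hz', hc i hi]
        · simp [hz', hc i hi, hik, hz i (by simp [hi, hik])]
      have horth : inner ℝ (P z') (P ((z k * s) • u)) = 0 := by
        rw [map_smul, inner_smul_right, ho z' hz's, mul_zero]
      have hb := norm_le_of_orth horth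
      rw [← map_add, ← hzz] at hb
      have r1 := (hr z' hz's).mono (Finset.subset_insert u B)
      have r2 := (SRep.single (P := P) (Finset.mem_insert_self u B)).smul (z k * s)
      have r3 := r1.add r2
      rw [← hzz] at r3
      refine r3.le ?_
      rw [Finset.card_insert_of_notMem hk]
      have h2 := hb.2
      rw [map_smul, norm_smul, Real.norm_eq_abs] at h2
      have := mul_le_mul_of_nonneg_left hb.1 (Nat.cast_nonneg (α := ℝ) S.card)
      push_cast
      linarith

/-- the two-vector estimate -/
lemma two_vec (u v : F) (hu : ‖u‖ = 1) (hv : ‖v‖ = 1) (a b : ℝ) (hab : 0 ≤ a * b) (h : |b| ≤ |a|) :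
    |a - b| + 3 * (|b| * ‖u - v‖) ≤ 4 * ‖a • u - b • v‖ := by
  have e1 : ‖a • u - b • v‖ ^ 2 = (a - b) ^ 2 + a * b * ‖u - v‖ ^ 2 := by
    rw [norm_sub_sq_real, norm_sub_sq_real, norm_smul, norm_smul, hu, hv, inner_smul_left,
      inner_smul_right]
    simp only [Real.norm_eq_abs, mul_one, sq_abs, conj_trivial]
    ring
  have e2 : b ^ 2 ≤ a * b := by
    rw [← abs_of_nonneg hab, abs_mul, ← sq_abs]
    nlinarith [abs_nonneg b]
  have k1 : |a - b| ≤ ‖a • u - b • v‖ := by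
    apply abs_le_of_sq_le_sq _ (norm_nonneg _)
    nlinarith [mul_nonneg hab (sq_nonneg ‖u - v‖)]
  have k2 : |b| * ‖u - v‖ ≤ ‖a • u - b • v‖ := by
    apply le_of_sq_le_sq _ (norm_nonneg _)
    rw [mul_pow, sq_abs, e1]
    nlinarith [mul_le_mul_of_nonneg_right e2 (sq_nonneg ‖u - v‖), sq_nonneg (a - b)]
  linarith

/-- Dictionary for pairs, one sign. -/
lemma exists_pairs (P : (Fin n → ℝ) →ₗ[ℝ] F) (hn : 1 ≤ n) (u v : Fin n → (Fin n → ℝ)) :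
    ∃ G : Finset (Fin n → ℝ), (G.card : ℝ) ≤ 2 * (n * Real.sqrt n) ∧
      (∀ d ∈ G, ∃ i j, d = u i - v j) ∧
      ∀ i j, SRep P G (u i - v j) (3 * ‖P (u i - v j)‖) := by
  classical
  obtain ⟨E, -, hc, hf⟩ := spanner n (fun e => ‖P (u e.1 - v e.2)‖) Finset.univ
  refine ⟨E.image (fun e => u e.1 - v e.2), ?_, ?_, ?_⟩
  · refine le_trans ?_ (rect_free_count' n hn E hf)
    exact_mod_cast Finset.card_image_le
  · intro d hd
    obtain ⟨e, -, rfl⟩ := Finset.mem_image.1 hd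
    exact ⟨_, _, rfl⟩
  · intro i j
    obtain ⟨k, l, h1, h2, h3, w1, w2, w3⟩ := hc (i, j) (Finset.mem_univ _)
    have r1 := SRep.single (P := P) (Finset.mem_image_of_mem (fun e => u e.1 - v e.2) h1)
    have r2 := (SRep.single (P := P)
      (Finset.mem_image_of_mem (fun e => u e.1 - v e.2) h2)).smul (-1)
    have r3 := SRep.single (P := P) (Finset.mem_image_of_mem (fun e => u e.1 - v e.2) h3)
    have r := (r1.add r2).add r3
    have : u i - v k + (-1 : ℝ) • (u l - v k) + (u l - v j) = u i - v j := by
      simp only [neg_smul, one_smul]; abel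
    simp only [this] at r
    refine r.le ?_
    simp only [abs_neg, abs_one, one_mul]
    simp only at w1 w2 w3
    linarith

/-- Dictionary attached to a set `S`. -/
lemma exists_dict (P : (Fin n → ℝ) →ₗ[ℝ] F) (hn : 1 ≤ n) (S : Finset (Fin n)) :
    ∃ D : Finset (Fin n → ℝ), (D.card : ℝ) ≤ 6 * (n * Real.sqrt n) ∧
      (∀ d ∈ D, ∃ i j, ∀ q, q ∉ S → q ≠ i → q ≠ j → d q = 0) ∧
      ∀ (z : Fin n → ℝ) (α β : ℝ) (i j : Fin n), (∀ q, q ∉ S → z q = 0) →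
        SRep P D (z + α • Pi.single i 1 + β • Pi.single j 1)
          ((S.card + 4) * ‖P (z + α • Pi.single i 1 + β • Pi.single j 1)‖) := by
  classical
  obtain ⟨B, hB, hBs, hBr⟩ := exists_base P S
  choose u c s hc hu he hunit ho using exists_resid P S
  obtain ⟨G, hG, hGs, hGr⟩ := exists_pairs P hn u u
  obtain ⟨G', hG', hGs', hGr'⟩ := exists_pairs P hn u (fun i => - u i)
  let U := Finset.univ.image u
  have hU : U.card ≤ n := Finset.card_image_le.trans (by simp)
  let D := (B ∪ U) ∪ (G ∪ G')
  have hBD : B ⊆ D := Finset.subset_union_left.trans Finset.subset_union_left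
  have hUD : U ⊆ D := Finset.subset_union_right.trans Finset.subset_union_left
  have hGD : G ⊆ D := Finset.subset_union_left.trans Finset.subset_union_right
  have hGD' : G' ⊆ D := Finset.subset_union_right.trans Finset.subset_union_right
  have hn' : (1 : ℝ) ≤ n := by exact_mod_cast hn
  -- ordered pair estimate
  have key0 : ∀ (a b : ℝ) (i j : Fin n), |b| ≤ |a| → ‖P (u i)‖ = 1 → ‖P (u j)‖ = 1 →
      SRep P D (a • u i + b • u j) (4 * ‖P (a • u i + b • u j)‖) := by
    intro a b i j hab hi hj
    have r1 : SRep P D (u i) ‖P (u i)‖ :=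
      SRep.single (hUD (Finset.mem_image_of_mem u (Finset.mem_univ i)))
    rcases le_total 0 (a * b) with h | h
    · have r2 := ((hGr' i j).mono hGD').smul b
      have r := (r1.smul (a - b)).add r2
      have e : (a - b) • u i + b • (u i - -u j) = a • u i + b • u j := by
        rw [sub_smul, smul_sub, smul_neg]; abel
      rw [e] at r
      refine r.le ?_
      have := two_vec (P (u i)) (P (- u j)) hi (by simpa using hj) a b h hab
      rw [hi]
      have e2 : P (a • u i + b • u j) = a • P (u i) - b • P (- u j) := by simp
      rw [e2, map_sub]
      linarith
    · have r2 := ((hGr i j).mono hGD).smul (-b)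
      have r := (r1.smul (a - -b)).add r2
      have e : (a - -b) • u i + (-b) • (u i - u j) = a • u i + b • u j := by
        rw [sub_smul, smul_sub, neg_smul, neg_smul]; abel
      rw [e] at r
      refine r.le ?_
      have := two_vec (P (u i)) (P (u j)) hi hj a (-b) (by linarith) (by simpa using hab)
      rw [hi]
      have e2 : P (a • u i + b • u j) = a • P (u i) - (-b) • P (u j) := by simp
      rw [e2, map_sub]
      linarith
  have key : ∀ (a b : ℝ) (i j : Fin n),
      SRep P D (a • u i + b • u j) (4 * ‖P (a • u i + b • u j)‖) := by
    intro a b i j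
    have ri : SRep P D (u i) ‖P (u i)‖ :=
      SRep.single (hUD (Finset.mem_image_of_mem u (Finset.mem_univ i)))
    have rj : SRep P D (u j) ‖P (u j)‖ :=
      SRep.single (hUD (Finset.mem_image_of_mem u (Finset.mem_univ j)))
    have r := (ri.smul a).add (rj.smul b)
    rcases hunit i with hi | hi
    · refine r.le ?_
      simp only [map_add, map_smul, hi, smul_zero, zero_add, norm_zero, mul_zero, norm_smul,
        Real.norm_eq_abs]
      nlinarith [mul_nonneg (abs_nonneg b) (norm_nonneg (P (u j)))]
    rcases hunit j with hj | hj
    · refine r.le ?_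
      simp only [map_add, map_smul, hj, smul_zero, add_zero, norm_zero, mul_zero, norm_smul,
        Real.norm_eq_abs]
      nlinarith [mul_nonneg (abs_nonneg a) (norm_nonneg (P (u i)))]
    rcases le_total |b| |a| with h | h
    · exact key0 a b i j h hi hj
    · rw [add_comm]
      exact key0 b a j i h hj hi
  refine ⟨D, ?_, ?_, ?_⟩
  · have h1 : D.card ≤ (B.card + U.card) + (G.card + G'.card) :=
      (Finset.card_union_le _ _).trans
        (Nat.add_le_add (Finset.card_union_le _ _) (Finset.card_union_le _ _))
    have h2 : (D.card : ℝ) ≤ ((B.card : ℝ) + U.card) + (G.card + G'.card) := by exact_mod_cast h1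
    have h3 : (B.card : ℝ) ≤ n := by
      have : S.card ≤ n := by simpa using Finset.card_le_univ S
      exact_mod_cast hB.trans this
    have h4 : (U.card : ℝ) ≤ n := by exact_mod_cast hU
    have h5 : (n : ℝ) ≤ n * Real.sqrt n :=
      le_mul_of_one_le_right (by positivity) (Real.one_le_sqrt.mpr hn')
    linarith
  · intro d hd
    have i0 : Fin n := ⟨0, hn⟩
    simp only [D, Finset.mem_union] at hd
    rcases hd with (hd | hd) | (hd | hd)
    · exact ⟨i0, i0, fun q hq _ _ => hBs d hd q hq⟩
    · obtain ⟨i, -, rfl⟩ := Finset.mem_image.1 hd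
      exact ⟨i, i, fun q hq h _ => hu i q hq h⟩
    · obtain ⟨i, j, rfl⟩ := hGs d hd
      exact ⟨i, j, fun q hq h h' => by simp [hu i q hq h, hu j q hq h']⟩
    · obtain ⟨i, j, rfl⟩ := hGs' d hd
      exact ⟨i, j, fun q hq h h' => by simp [hu i q hq h, hu j q hq h']⟩
  · intro z α β i j hz
    set z' := z + α • c i + β • c j with hz'
    have hx : z + α • Pi.single i 1 + β • Pi.single j 1 =
        z' + ((α * s i) • u i + (β * s j) • u j) := by
      rw [hz', he i, he j]
      simp only [smul_add, mul_smul]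
      abel
    have hz's : ∀ q, q ∉ S → z' q = 0 := by
      intro q hq
      simp [hz', hz q hq, hc i q hq, hc j q hq]
    rw [hx]
    have horth : inner ℝ (P z') (P ((α * s i) • u i + (β * s j) • u j)) = 0 := by
      rw [map_add P ((α * s i) • u i), map_smul, map_smul, inner_add_right, inner_smul_right, inner_smul_right,
        ho i z' hz's, ho j z' hz's]
      simp
    have hb := norm_le_of_orth horth
    rw [← map_add] at hb
    refine (((hBr z' hz's).mono hBD).add (key _ _ i j)).le ?_
    have := mul_le_mul_of_nonneg_left hb.1 (Nat.cast_nonneg (α := ℝ) S.card)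
    linarith [hb.2]

end rep

lemma exists_cover (n t : ℕ) (hn : 1 ≤ n) (T : Finset (Fin n)) (hT : T.card ≤ t) :
    ∃ g : Fin t → Fin n, ∀ q ∈ T, ∃ k, g k = q := by
  classical
  let e := T.equivFin
  refine ⟨fun k => if h : k.1 < T.card then (e.symm ⟨k.1, h⟩ : Fin n) else ⟨0, hn⟩, ?_⟩
  intro q hq
  refine ⟨⟨(e ⟨q, hq⟩).1, lt_of_lt_of_le (e ⟨q, hq⟩).2 hT⟩, ?_⟩
  simp

/-- every collection of unit vectors p₁,…,pₙ admits a dictionary of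
O(n^{t-1/2}) t-sparse coefficient vectors through which every t-sparse combination can be
routed with ℓ1 cost O(t^{3/2} log n). -/
theorem stmt18 : ∃ C : ℝ, 0 < C ∧ ∀ (n m t : ℕ), 2 ≤ n → 2 ≤ t →
    ∀ p : Fin n → Fin m → ℝ, (∀ i, l2norm (p i) = 1) →
      ∃ D : Finset (Fin n → ℝ), (D.card : ℝ) ≤ C * (n : ℝ) ^ ((t : ℝ) - 1 / 2) ∧
        (∀ d ∈ D, SparseVec t d) ∧
        ∀ x : Fin n → ℝ, SparseVec t x →
          ∃ a : (Fin n → ℝ) → ℝ, x = ∑ d ∈ D, a d • d ∧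
            ∑ d ∈ D, |a d| * l2norm (∑ i, d i • p i) ≤
              C * (t : ℝ) ^ ((3 : ℝ) / 2) * Real.log n * l2norm (∑ i, x i • p i) := by
  classical
  refine ⟨6, by norm_num, ?_⟩
  intro n m t hn ht p _
  obtain ⟨r, rfl⟩ : ∃ r, t = r + 2 := ⟨t - 2, by omega⟩
  have hn1 : 1 ≤ n := by omega
  let P : (Fin n → ℝ) →ₗ[ℝ] EuclideanSpace ℝ (Fin m) :=
    ∑ i, (LinearMap.proj i : (Fin n → ℝ) →ₗ[ℝ] ℝ).smulRight (WithLp.toLp 2 (p i))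
  have hP : ∀ d : Fin n → ℝ, l2norm (∑ i, d i • p i) = ‖P d‖ := by
    intro d
    rw [EuclideanSpace.norm_eq, l2norm]
    congr 1
    refine Finset.sum_congr rfl fun k _ => ?_
    simp [P, LinearMap.sum_apply, Finset.sum_apply]
  choose Dic hcard hsupp hrep using exists_dict P hn1
  let S : (Fin r → Fin n) → Finset (Fin n) := fun f => Finset.univ.image f
  have hS : ∀ f, (S f).card ≤ r := fun f => Finset.card_image_le.trans (by simp)
  refine ⟨Finset.univ.biUnion (fun f : Fin r → Fin n => Dic (S f)), ?_, ?_, ?_⟩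
  · have h1 : ((Finset.univ.biUnion (fun f : Fin r → Fin n => Dic (S f))).card : ℝ) ≤
        ∑ f : Fin r → Fin n, ((Dic (S f)).card : ℝ) := by
      exact_mod_cast Finset.card_biUnion_le
    have h2 : ∑ f : Fin r → Fin n, ((Dic (S f)).card : ℝ) ≤
        ∑ f : Fin r → Fin n, 6 * (n * Real.sqrt n) :=
      Finset.sum_le_sum fun f _ => hcard (S f)
    refine h1.trans (h2.trans (le_of_eq ?_))
    have hn0 : (0 : ℝ) < n := by exact_mod_cast hn1
    rw [Finset.sum_const, Finset.card_univ, Fintype.card_fun, Fintype.card_fin, Fintype.card_fin,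
      nsmul_eq_mul, show (((r + 2 : ℕ) : ℝ) - 1 / 2) = (r : ℝ) + (1 + 1 / 2) by push_cast; ring,
      Real.rpow_add hn0, Real.rpow_add hn0, Real.rpow_natCast, Real.rpow_one, ← Real.sqrt_eq_rpow]
    push_cast
    ring
  · intro d hd
    obtain ⟨f, -, hd⟩ := Finset.mem_biUnion.1 hd
    obtain ⟨i, j, h⟩ := hsupp (S f) d hd
    have hsub : {q | d q ≠ 0} ⊆ ((insert i (insert j (S f)) : Finset (Fin n)) : Set (Fin n)) := by
      intro q hq
      by_contra hc
      simp only [Finset.coe_insert, Set.mem_insert_iff, Finset.mem_coe, not_or] at hc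
      exact hq (h q hc.2.2 hc.1 hc.2.1)
    unfold SparseVec
    refine (Set.ncard_le_ncard hsub (Finset.finite_toSet _)).trans ?_
    rw [Set.ncard_coe_finset]
    have a1 := Finset.card_insert_le i (insert j (S f))
    have a2 := Finset.card_insert_le j (S f)
    have a3 := hS f
    omega
  · intro x hx
    have hT : (Finset.univ.filter (fun q => x q ≠ 0)).card ≤ r + 2 := by
      unfold SparseVec at hx
      rw [← Set.ncard_coe_finset]
      simpa using hx
    obtain ⟨g, hg⟩ := exists_cover n (r + 2) hn1 _ hT
    let f : Fin r → Fin n := fun k => g (k.castAdd 2)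
    let i := g (Fin.natAdd r 0)
    let j := g (Fin.natAdd r 1)
    have hcov : ∀ q, x q ≠ 0 → q ∈ S f ∨ q = i ∨ q = j := by
      intro q hq
      obtain ⟨k, rfl⟩ := hg q (by simp [hq])
      refine Fin.addCases (fun k => ?_) (fun k => ?_) k
      · left
        exact Finset.mem_image_of_mem f (Finset.mem_univ k)
      · right
        fin_cases k
        · left; rfl
        · right; rfl
    let z : Fin n → ℝ := fun q => if q ∈ S f then x q else 0
    let α : ℝ := if i ∈ S f then 0 else x i
    let β : ℝ := if j ∈ S f ∨ j = i then 0 else x j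
    have hxe : x = z + α • Pi.single i 1 + β • Pi.single j 1 := by
      ext q
      have := hcov q
      simp only [Pi.add_apply, Pi.smul_apply, Pi.single_apply, smul_eq_mul, z, α, β]
      by_cases hqS : q ∈ S f <;> by_cases hqi : q = i <;> by_cases hqj : q = j <;> grind
    have hr := hrep (S f) z α β i j (by intro q hq; simp [z, hq])
    rw [← hxe] at hr
    obtain ⟨a, ha, hc⟩ := hr.mono (Finset.subset_biUnion_of_mem
      (fun f : Fin r → Fin n => Dic (S f)) (Finset.mem_univ f))
    refine ⟨a, ha, ?_⟩
    simp only [hP]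
    refine hc.trans ?_
    refine mul_le_mul_of_nonneg_right ?_ (norm_nonneg _)
    have b1 : ((S f).card : ℝ) ≤ r := by exact_mod_cast hS f
    have b2 : (1 / 2 : ℝ) ≤ Real.log n := by
      have : Real.log 2 ≤ Real.log n := Real.log_le_log (by norm_num) (by exact_mod_cast hn)
      linarith [Real.log_two_gt_d9]
    have b3 : ((r + 2 : ℕ) : ℝ) ≤ ((r + 2 : ℕ) : ℝ) ^ ((3 : ℝ) / 2) := by
      conv_lhs => rw [← Real.rpow_one ((r + 2 : ℕ) : ℝ)]
      apply Real.rpow_le_rpow_of_exponent_le _ (by norm_num)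
      push_cast; linarith [Nat.cast_nonneg (α := ℝ) r]
    have b4 : (6 * ((r + 2 : ℕ) : ℝ)) * (1 / 2) ≤
        6 * ((r + 2 : ℕ) : ℝ) ^ ((3 : ℝ) / 2) * Real.log n :=
      mul_le_mul (by linarith) b2 (by norm_num) (by positivity)
    refine le_trans ?_ b4
    push_cast
    linarith [Nat.cast_nonneg (α := ℝ) r]
end
end
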